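/- arXiv:1304.0562 — 2 statements merged into one kernel-verified Lean document; each statement's English description precedes it below -/
import Mathlib

section
/- There exists a universal constant C such that for all x, y ∈ [0,1] and every measurable set S ⊆ (0,∞) of finite Lebesgue measure λ(S): |J(x,y,S) − 2·λ(S)·sin(πx)·sin(πy)| ≤ C·min( min(x,y)·(1 − max(x,y)) , E_{inf S}·sin(πx)·sin(πy) ), where min(·, +∞) discards the second term when inf S = 0. -/
open Real MeasureTheory Set Filter

/-- Transition density of Brownian motion killed upon exiting `(0,a)`. -/
noncomputable def pker (a t x y : ℝ) : ℝ :=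
  (2/a) * ∑' n : ℕ, Real.exp (-(π^2) * ((n : ℝ) + 1)^2 * t / (2 * a^2)) *
    Real.sin (π * ((n : ℝ) + 1) * x / a) * Real.sin (π * ((n : ℝ) + 1) * y / a)

/-- `J(x,y,S) = ∫_S e^{π²s/2}·p¹_s(x,y) ds`. -/
noncomputable def Jfun (x y : ℝ) (S : Set ℝ) : ℝ :=
  ∫ s in S, Real.exp (π^2 * s / 2) * pker 1 s x y

/-- `E_t = π²·∑_{n≥2} n²·exp(−π²(n²−1)t/2)` (for `t > 0`; `E_0 = +∞`). -/
noncomputable def Efun (t : ℝ) : ℝ :=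
  π^2 * ∑' n : ℕ, ((n : ℝ) + 2)^2 * Real.exp (-(π^2) * (((n : ℝ) + 2)^2 - 1) * t / 2)

/-!
Put `R s = exp (π² s / 2) p¹_s(x, y) - 2 sin (π x) sin (π y)`, so that the quantity to be estimated
is `∫_S R`. By `|sin (n θ)| ≤ n |sin θ|`, the eigenfunction expansion gives
`|R s| ≤ E_s sin (π x) sin (π y)`, and `s ↦ exp s * E_s` is decreasing because the spectral gaps
`π² (n² - 1) / 2` exceed `1`; hence `∫_{s > t} |R s| ds ≤ E_t sin (π x) sin (π y)`, which is the
second bound. For `s ≤ 1` the exponential factor is bounded and `p¹ ≥ 0`, so there `∫ |R|` is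
controlled by the Green's function `∫ p¹_s(x, y) ds = 2 min(x, y) (1 - max(x, y))`, which also
dominates `sin (π x) sin (π y)` up to a constant; together with the case `t = 1` above this gives
the first bound.

Positivity of the kernel is read off from its Fourier series: `p¹_s(x, y)` is a positive multiple of
`ϑ(x - y) - ϑ(x + y)`, and the theta function is an increasing function of `cos`, being a
limit of the finite Jacobi triple products `∏ (1 + 2 q^(2m+1) cos θ + q^(4m+2))`.
-/

open HurwitzZeta
open scoped Topology

/-- The reciprocal `1 / (Q; Q)_j` of the `q`-Pochhammer symbol `(Q; Q)_j = ∏_{i=1}^j (1 - Q ^ i)`,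
out of which the coefficients of the finite Jacobi triple product are built. It vanishes for
`j < 0`, which makes `invQPochhammer_sub_one` hold for every integer. -/
noncomputable def invQPochhammer (Q : ℝ) : ℤ → ℝ
  | .ofNat n => (∏ i ∈ Finset.range n, (1 - Q ^ (i + 1)))⁻¹
  | .negSucc _ => 0

/-- The coefficient of `z ^ k` in `∏_{m=1}^N (1 + z q ^ (2m-1)) (1 + z⁻¹ q ^ (2m-1))`, divided by
`(q²; q²)_{2N}`; its limit as `N → ∞` is a constant multiple of the theta coefficient
`q ^ (k ^ 2)`. -/
noncomputable def tripleProductCoeff (q : ℝ) (N : ℕ) (k : ℤ) : ℝ :=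
  invQPochhammer (q ^ 2) (N - k) * invQPochhammer (q ^ 2) (N + k) * q ^ (k ^ 2)

lemma summable_mul_cos {ι : Type*} {d : ι → ℝ} (hd : Summable d) (φ : ι → ℝ) :
    Summable fun i ↦ d i * cos (φ i) :=
  hd.abs.of_norm_bounded fun i ↦ by
    simpa [abs_mul] using mul_le_of_le_one_right (abs_nonneg (d i)) (abs_cos_le_one _)

lemma hasSum_int_mul_two_mul_cos {d : ℤ → ℝ} (hd : Summable d) (θ : ℝ) :
    HasSum (fun k : ℤ ↦ (d (k - 1) + d (k + 1)) * cos (k * θ))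
      ((∑' k : ℤ, d k * cos (k * θ)) * (2 * cos θ)) := by
  have hsum (e : ℤ → ℤ) : Summable fun k ↦ d k * cos (e k * θ) := summable_mul_cos hd _
  have hsub : HasSum (fun k : ℤ ↦ d (k - 1) * cos (k * θ))
      (∑' k : ℤ, d k * cos ((k + 1 : ℤ) * θ)) := by
    simpa [Function.comp_def] using (Equiv.subRight (1 : ℤ)).hasSum_iff.2 (hsum (· + 1)).hasSum
  have hadd : HasSum (fun k : ℤ ↦ d (k + 1) * cos (k * θ))
      (∑' k : ℤ, d k * cos ((k - 1 : ℤ) * θ)) := by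
    simpa [Function.comp_def] using (Equiv.addRight (1 : ℤ)).hasSum_iff.2 (hsum (· - 1)).hasSum
  have hprod : (∑' k : ℤ, d k * cos (k * θ)) * (2 * cos θ) =
      ∑' k : ℤ, d k * cos ((k + 1 : ℤ) * θ) + ∑' k : ℤ, d k * cos ((k - 1 : ℤ) * θ) := by
    rw [← (hsum (· + 1)).tsum_add (hsum (· - 1)), ← tsum_mul_right]
    refine tsum_congr fun k ↦ ?_
    push_cast
    rw [add_mul, sub_mul, one_mul, cos_add, cos_sub]
    ring
  rw [hprod]
  simpa only [add_mul] using hsub.add hadd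

section TripleProduct

variable {Q q : ℝ}

lemma one_sub_pow_succ_pos (hQ₀ : 0 ≤ Q) (hQ₁ : Q < 1) (n : ℕ) : 0 < 1 - Q ^ (n + 1) :=
  sub_pos.2 (pow_lt_one₀ hQ₀ hQ₁ n.succ_ne_zero)

lemma invQPochhammer_of_neg {j : ℤ} (hj : j < 0) : invQPochhammer Q j = 0 := by
  obtain ⟨_, rfl⟩ := Int.eq_negSucc_of_lt_zero hj
  rfl

lemma invQPochhammer_natCast (Q : ℝ) (n : ℕ) :
    invQPochhammer Q n = (∏ i ∈ Finset.range n, (1 - Q ^ (i + 1)))⁻¹ := rfl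

lemma invQPochhammer_nonneg (hQ₀ : 0 ≤ Q) (hQ₁ : Q < 1) (j : ℤ) : 0 ≤ invQPochhammer Q j := by
  rcases j with n | _
  · exact inv_nonneg.2 (Finset.prod_nonneg fun i _ ↦ (one_sub_pow_succ_pos hQ₀ hQ₁ i).le)
  · exact le_rfl

lemma invQPochhammer_sub_one (hQ₀ : 0 ≤ Q) (hQ₁ : Q < 1) (j : ℤ) :
    invQPochhammer Q (j - 1) = (1 - Q ^ j) * invQPochhammer Q j := by
  rcases lt_trichotomy j 0 with hj | rfl | hj
  · rw [invQPochhammer_of_neg hj, invQPochhammer_of_neg (by lia), mul_zero]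
  · rw [invQPochhammer_of_neg (by lia), zpow_zero, sub_self, zero_mul]
  · obtain ⟨n, rfl⟩ : ∃ n : ℕ, j = (n + 1 : ℕ) := ⟨(j - 1).toNat, by lia⟩
    have hne := (one_sub_pow_succ_pos hQ₀ hQ₁ n).ne'
    rw [Nat.cast_succ, add_sub_cancel_right, ← Nat.cast_succ, zpow_natCast,
      invQPochhammer_natCast, invQPochhammer_natCast, Finset.prod_range_succ]
    field_simp

lemma summable_neg_pow_succ (hQ₀ : 0 ≤ Q) (hQ₁ : Q < 1) :
    Summable fun i : ℕ ↦ -Q ^ (i + 1) :=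
  ((summable_nat_add_iff 1).2 (summable_geometric_of_lt_one hQ₀ hQ₁)).neg

lemma tprod_one_sub_pow_succ_ne_zero (hQ₀ : 0 ≤ Q) (hQ₁ : Q < 1) :
    ∏' i : ℕ, (1 - Q ^ (i + 1)) ≠ 0 := by
  simpa only [← sub_eq_add_neg] using tprod_one_add_ne_zero_of_summable
    (fun i ↦ by simpa only [← sub_eq_add_neg] using (one_sub_pow_succ_pos hQ₀ hQ₁ i).ne')
    (summable_neg_pow_succ hQ₀ hQ₁).norm

lemma tendsto_invQPochhammer (hQ₀ : 0 ≤ Q) (hQ₁ : Q < 1) :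
    Tendsto (invQPochhammer Q) atTop (𝓝 (∏' i : ℕ, (1 - Q ^ (i + 1)))⁻¹) := by
  have hmul : Multipliable fun i : ℕ ↦ 1 - Q ^ (i + 1) := by
    simpa only [← sub_eq_add_neg] using
      Real.multipliable_one_add_of_summable (summable_neg_pow_succ hQ₀ hQ₁)
  rw [← Nat.map_cast_int_atTop, tendsto_map'_iff]
  exact hmul.hasProd.tendsto_prod_nat.inv₀ (tprod_one_sub_pow_succ_ne_zero hQ₀ hQ₁)

lemma monotone_invQPochhammer (hQ₀ : 0 ≤ Q) (hQ₁ : Q < 1) : Monotone (invQPochhammer Q) := by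
  refine monotone_int_of_le_succ fun j ↦ ?_
  have h := invQPochhammer_sub_one hQ₀ hQ₁ (j + 1)
  rw [add_sub_cancel_right] at h
  rcases lt_or_ge j (-1) with hj | hj
  · rw [invQPochhammer_of_neg (by lia), invQPochhammer_of_neg (by lia)]
  · obtain ⟨n, hn⟩ := Int.eq_ofNat_of_zero_le (show 0 ≤ j + 1 by lia)
    rw [h, hn, zpow_natCast]
    exact mul_le_of_le_one_left (invQPochhammer_nonneg hQ₀ hQ₁ _)
      (sub_le_self _ (pow_nonneg hQ₀ n))

lemma pow_mul_zpow_sub_one_sq (hq : q ≠ 0) (N : ℕ) (k : ℤ) :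
    q ^ (2 * N + 1) * q ^ ((k - 1) ^ 2) = q ^ (k ^ 2) * (q ^ 2) ^ (N + 1 - k) := by
  rw [← zpow_natCast, ← zpow_natCast, ← zpow_mul, ← zpow_add₀ hq, ← zpow_add₀ hq]
  push_cast
  ring_nf

lemma tripleProductCoeff_succ (hq₀ : 0 < q) (hq₁ : q < 1) (N : ℕ) (k : ℤ) :
    (1 - q ^ (4 * N + 2)) * (1 - q ^ (4 * N + 4)) * tripleProductCoeff q (N + 1) k =
      (1 + q ^ (4 * N + 2)) * tripleProductCoeff q N k + q ^ (2 * N + 1) *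
        (tripleProductCoeff q N (k - 1) + tripleProductCoeff q N (k + 1)) := by
  have hr := invQPochhammer_sub_one (sq_nonneg q) (pow_lt_one₀ hq₀.le hq₁ two_ne_zero)
  set a := (q ^ 2) ^ (N + 1 - k) with ha
  set b := (q ^ 2) ^ (N + 1 + k) with hb
  have hab : q ^ (4 * N + 4) = a * b := by
    rw [ha, hb, ← zpow_add₀ (by positivity), ← zpow_natCast, ← zpow_natCast, ← zpow_mul]
    push_cast
    ring_nf
  have hab' : q ^ (4 * N + 2) = a * b / q ^ 2 := by
    rw [← hab, eq_div_iff (by positivity), ← pow_add]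
  have hqa : q ^ (2 * N + 1) * q ^ ((k - 1) ^ 2) = q ^ (k ^ 2) * a :=
    pow_mul_zpow_sub_one_sq hq₀.ne' N k
  have hqb : q ^ (2 * N + 1) * q ^ ((k + 1) ^ 2) = q ^ (k ^ 2) * b := by
    simpa only [← neg_add', neg_sq, sub_neg_eq_add] using pow_mul_zpow_sub_one_sq hq₀.ne' N (-k)
  set A := invQPochhammer (q ^ 2) (N + 1 - k)
  set B := invQPochhammer (q ^ 2) (N + 1 + k)
  have ha₁ : invQPochhammer (q ^ 2) (N - k) = (1 - a) * A := by
    rw [ha, ← hr, sub_right_comm, add_sub_cancel_right]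
  have hb₁ : invQPochhammer (q ^ 2) (N + k) = (1 - b) * B := by
    rw [hb, ← hr, add_right_comm, add_sub_cancel_right]
  have ha₂ : invQPochhammer (q ^ 2) (N - (k + 1)) =
      (1 - a / q ^ 2) * invQPochhammer (q ^ 2) (N - k) := by
    rw [ha, div_eq_mul_inv, ← zpow_sub_one₀ (pow_pos hq₀ 2).ne', ← sub_sub, hr, sub_right_comm,
      add_sub_cancel_right]
  have hb₂ : invQPochhammer (q ^ 2) (N + (k - 1)) =
      (1 - b / q ^ 2) * invQPochhammer (q ^ 2) (N + k) := by
    rw [hb, div_eq_mul_inv, ← zpow_sub_one₀ (pow_pos hq₀ 2).ne', ← add_sub_assoc, hr,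
      add_right_comm, add_sub_cancel_right]
  simp only [tripleProductCoeff, Nat.cast_succ, ha₂, hb₂, ha₁, hb₁, sub_sub_eq_add_sub,
    ← add_assoc, add_right_comm (N : ℤ) k 1]
  rw [hab, hab']
  linear_combination
    -(A * ((1 - b / q ^ 2) * ((1 - b) * B))) * hqa - (1 - a / q ^ 2) * ((1 - a) * A) * B * hqb

lemma summable_tripleProductCoeff (q : ℝ) (N : ℕ) : Summable (tripleProductCoeff q N) := by
  refine summable_of_ne_finset_zero (s := Finset.Icc (-N : ℤ) N) fun k hk ↦ ?_
  rw [Finset.mem_Icc, not_and_or, not_le, not_le] at hk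
  rcases hk with hk | hk
  · rw [tripleProductCoeff, invQPochhammer_of_neg (j := N + k) (by lia), mul_zero, zero_mul]
  · rw [tripleProductCoeff, invQPochhammer_of_neg (j := N - k) (by lia), zero_mul, zero_mul]

lemma one_sub_mul_tsum_tripleProductCoeff_succ (hq₀ : 0 < q) (hq₁ : q < 1) (N : ℕ) (θ : ℝ) :
    (1 - q ^ (4 * N + 2)) * (1 - q ^ (4 * N + 4)) *
        ∑' k : ℤ, tripleProductCoeff q (N + 1) k * cos (k * θ) =
      (1 + 2 * q ^ (2 * N + 1) * cos θ + q ^ (4 * N + 2)) *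
        ∑' k : ℤ, tripleProductCoeff q N k * cos (k * θ) := by
  have hsum := summable_tripleProductCoeff q N
  have hadd := ((summable_mul_cos hsum fun k ↦ k * θ).hasSum.mul_left (1 + q ^ (4 * N + 2))).add
    ((hasSum_int_mul_two_mul_cos hsum θ).mul_left (q ^ (2 * N + 1)))
  rw [← tsum_mul_left]
  calc ∑' k : ℤ, (1 - q ^ (4 * N + 2)) * (1 - q ^ (4 * N + 4)) *
        (tripleProductCoeff q (N + 1) k * cos (k * θ))
      = ∑' k : ℤ, ((1 + q ^ (4 * N + 2)) * (tripleProductCoeff q N k * cos (k * θ)) +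
          q ^ (2 * N + 1) * ((tripleProductCoeff q N (k - 1) + tripleProductCoeff q N (k + 1)) *
            cos (k * θ))) := tsum_congr fun k ↦ by
        rw [← mul_assoc, tripleProductCoeff_succ hq₀ hq₁]
        ring
    _ = (1 + q ^ (4 * N + 2)) * ∑' k : ℤ, tripleProductCoeff q N k * cos (k * θ) +
          q ^ (2 * N + 1) *
            ((∑' k : ℤ, tripleProductCoeff q N k * cos (k * θ)) * (2 * cos θ)) := hadd.tsum_eq
    _ = (1 + 2 * q ^ (2 * N + 1) * cos θ + q ^ (4 * N + 2)) *
          ∑' k : ℤ, tripleProductCoeff q N k * cos (k * θ) := by ring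

lemma tsum_tripleProductCoeff_mul_cos (hq₀ : 0 < q) (hq₁ : q < 1) (N : ℕ) (θ : ℝ) :
    ∑' k : ℤ, tripleProductCoeff q N k * cos (k * θ) =
      invQPochhammer (q ^ 2) (2 * N : ℕ) *
        ∏ m ∈ Finset.range N, (1 + 2 * q ^ (2 * m + 1) * cos θ + q ^ (4 * m + 2)) := by
  induction N with
  | zero =>
    rw [tsum_eq_single 0 fun k hk ↦ ?_]
    · simp [tripleProductCoeff, invQPochhammer]
    · rcases hk.lt_or_gt with hk | hk
      · rw [tripleProductCoeff, invQPochhammer_of_neg (j := (0 : ℕ) + k) (by lia)]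
        simp only [mul_zero, zero_mul]
      · rw [tripleProductCoeff, invQPochhammer_of_neg (j := (0 : ℕ) - k) (by lia)]
        simp only [zero_mul]
  | succ N ih =>
    have hQ₀ := sq_nonneg q
    have hQ₁ := pow_lt_one₀ hq₀.le hq₁ two_ne_zero
    have hne₁ := (one_sub_pow_succ_pos hQ₀ hQ₁ (2 * N)).ne'
    have hne₂ := (one_sub_pow_succ_pos hQ₀ hQ₁ (2 * N + 1)).ne'
    have hrec := one_sub_mul_tsum_tripleProductCoeff_succ hq₀ hq₁ N θ
    have hqN₁ : q ^ (4 * N + 2) = (q ^ 2) ^ (2 * N + 1) := by ring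
    have hqN₂ : q ^ (4 * N + 4) = (q ^ 2) ^ (2 * N + 1 + 1) := by ring
    rw [ih, mul_comm, ← eq_div_iff (by rw [hqN₁, hqN₂]; exact mul_ne_zero hne₁ hne₂)] at hrec
    rw [hrec, show 2 * (N + 1) = 2 * N + 1 + 1 by ring, invQPochhammer_natCast,
      invQPochhammer_natCast, Finset.prod_range_succ _ N, Finset.prod_range_succ _ (2 * N + 1),
      Finset.prod_range_succ _ (2 * N), ← hqN₁, ← hqN₂]
    field_simp

lemma tsum_tripleProductCoeff_mul_cos_le (hq₀ : 0 < q) (hq₁ : q < 1) (N : ℕ) {θ φ : ℝ}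
    (h : cos φ ≤ cos θ) :
    ∑' k : ℤ, tripleProductCoeff q N k * cos (k * φ) ≤
      ∑' k : ℤ, tripleProductCoeff q N k * cos (k * θ) := by
  rw [tsum_tripleProductCoeff_mul_cos hq₀ hq₁, tsum_tripleProductCoeff_mul_cos hq₀ hq₁]
  refine mul_le_mul_of_nonneg_left (Finset.prod_le_prod (fun m _ ↦ ?_) fun m _ ↦ ?_)
    (invQPochhammer_nonneg (sq_nonneg q) (pow_lt_one₀ hq₀.le hq₁ two_ne_zero) _)
  · calc 0 ≤ (1 - q ^ (2 * m + 1)) ^ 2 := sq_nonneg _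
      _ = 1 + 2 * q ^ (2 * m + 1) * (-1) + q ^ (4 * m + 2) := by ring
      _ ≤ _ := by gcongr; exact neg_one_le_cos φ
  · gcongr

lemma tendsto_tsum_tripleProductCoeff_mul_cos (hq₀ : 0 < q) (hq₁ : q < 1)
    (hsum : Summable fun k : ℤ ↦ q ^ (k ^ 2)) (θ : ℝ) :
    Tendsto (fun N ↦ ∑' k : ℤ, tripleProductCoeff q N k * cos (k * θ)) atTop
      (𝓝 ((∏' i : ℕ, (1 - (q ^ 2) ^ (i + 1)))⁻¹ ^ 2 * ∑' k : ℤ, q ^ (k ^ 2) * cos (k * θ))) := by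
  have hQ₀ := sq_nonneg q
  have hQ₁ := pow_lt_one₀ hq₀.le hq₁ two_ne_zero
  set L := (∏' i : ℕ, (1 - (q ^ 2) ^ (i + 1)))⁻¹
  have hlim : Tendsto (invQPochhammer (q ^ 2)) atTop (𝓝 L) := tendsto_invQPochhammer hQ₀ hQ₁
  have hle := (monotone_invQPochhammer hQ₀ hQ₁).ge_of_tendsto hlim
  have hnonneg := invQPochhammer_nonneg hQ₀ hQ₁
  rw [← tsum_mul_left]
  refine tendsto_tsum_of_dominated_convergence (hsum.mul_left (L ^ 2)) (fun k ↦ ?_)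
    (.of_forall fun N k ↦ ?_)
  · have hsub : Tendsto (fun N : ℕ ↦ (N - k : ℤ)) atTop atTop :=
      tendsto_atTop_add_const_right _ _ tendsto_natCast_atTop_atTop
    have hadd : Tendsto (fun N : ℕ ↦ (N + k : ℤ)) atTop atTop :=
      tendsto_atTop_add_const_right _ _ tendsto_natCast_atTop_atTop
    rw [sq L, ← mul_assoc]
    exact (((hlim.comp hsub).mul (hlim.comp hadd)).mul_const _).mul_const _
  · have hc : 0 ≤ tripleProductCoeff q N k :=
      mul_nonneg (mul_nonneg (hnonneg _) (hnonneg _)) (zpow_nonneg hq₀.le _)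
    calc ‖tripleProductCoeff q N k * cos (k * θ)‖ ≤ tripleProductCoeff q N k := by
          rw [norm_mul, norm_of_nonneg hc]
          exact mul_le_of_le_one_right hc (abs_cos_le_one _)
      _ ≤ L * L * q ^ (k ^ 2) := by
          rw [tripleProductCoeff]
          gcongr
          exacts [hnonneg _, (hnonneg 0).trans (hle 0), hle _, hle _]
      _ = L ^ 2 * q ^ (k ^ 2) := by rw [sq L]

end TripleProduct

lemma hasSum_int_cosKernel_real (a : ℝ) {t : ℝ} (ht : 0 < t) :
    HasSum (fun k : ℤ ↦ exp (-π * t) ^ (k ^ 2) * cos (k * (2 * π * a))) (cosKernel a t) := by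
  have h := Complex.hasSum_re (hasSum_int_cosKernel a ht)
  rw [Complex.ofReal_re] at h
  convert! h using 2 with k
  have hexp : exp (-π * t) ^ (k ^ 2) = exp (-π * k ^ 2 * t) := by
    rw [← rpow_intCast, ← exp_mul]
    push_cast
    ring_nf
  have hphase : 2 * π * Complex.I * a * k = ((k * (2 * π * a) : ℝ) : ℂ) * Complex.I := by
    push_cast
    ring
  rw [Complex.re_mul_ofReal, hphase, Complex.exp_ofReal_mul_I_re, hexp, mul_comm]

theorem cosKernel_le_cosKernel {a b t : ℝ} (h : cos (2 * π * b) ≤ cos (2 * π * a)) (ht : 0 < t) :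
    cosKernel b t ≤ cosKernel a t := by
  set q := exp (-π * t)
  have hq₀ : 0 < q := exp_pos _
  have hq₁ : q < 1 := exp_lt_one_iff.2 (by nlinarith [pi_pos])
  have hsum : Summable fun k : ℤ ↦ q ^ (k ^ 2) := by
    simpa only [mul_zero, cos_zero, mul_one] using (hasSum_int_cosKernel_real 0 ht).summable
  have hL : 0 < (∏' i : ℕ, (1 - (q ^ 2) ^ (i + 1)))⁻¹ ^ 2 := by
    have := tprod_one_sub_pow_succ_ne_zero (sq_nonneg q) (pow_lt_one₀ hq₀.le hq₁ two_ne_zero)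
    positivity
  rw [← (hasSum_int_cosKernel_real a ht).tsum_eq, ← (hasSum_int_cosKernel_real b ht).tsum_eq]
  exact le_of_mul_le_mul_left (le_of_tendsto_of_tendsto'
    (tendsto_tsum_tripleProductCoeff_mul_cos hq₀ hq₁ hsum _)
    (tendsto_tsum_tripleProductCoeff_mul_cos hq₀ hq₁ hsum _)
    fun N ↦ tsum_tripleProductCoeff_mul_cos_le hq₀ hq₁ N h) hL

lemma integrable_tsum_of_summable_integral_norm {α ι E : Type*} [MeasurableSpace α]
    {μ : Measure α} [Countable ι] [NormedAddCommGroup E] [CompleteSpace E] {F : ι → α → E}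
    (hF : ∀ i, Integrable (F i) μ) (hsum : Summable fun i ↦ ∫ a, ‖F i a‖ ∂μ) :
    Integrable (fun a ↦ ∑' i, F i a) μ := by
  have hne : ∑' i, ‖(hF i).toL1 (F i)‖ₑ ≠ ⊤ :=
    tsum_enorm_ne_top_iff_summable_norm.2 (by simpa only [L1.norm_of_fun_eq_integral_norm])
  have hcoe : ∀ᵐ a ∂μ, ∀ i, (hF i).toL1 (F i) a = F i a := ae_all_iff.2 fun i ↦ (hF i).coeFn_toL1
  refine (L1.integrable_coeFn (∑' i, (hF i).toL1 (F i))).congr ?_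
  filter_upwards [Lp.coeFn_tsum hne, hcoe] with a htsum hF
  rw [htsum]
  exact tsum_congr hF

lemma norm_setIntegral_le_setIntegral_norm_of_subset {α E : Type*} [MeasurableSpace α]
    {μ : Measure α} [NormedAddCommGroup E] [NormedSpace ℝ E] {f : α → E} {S T : Set α}
    (hf : IntegrableOn f T μ) (hST : S ⊆ T) :
    ‖∫ a in S, f a ∂μ‖ ≤ ∫ a in T, ‖f a‖ ∂μ :=
  (norm_integral_le_integral_norm f).trans <|
    setIntegral_mono_set hf.norm (.of_forall fun _ ↦ norm_nonneg _) hST.eventuallyLE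

lemma integrableOn_const_mul_exp_neg_mul {r : ℝ} (hr : 0 < r) (c : ℝ) :
    IntegrableOn (fun t ↦ c * exp (-r * t)) (Ioi 0) :=
  (integrableOn_exp_mul_Ioi (neg_neg_of_pos hr) 0).const_mul c

lemma integral_const_mul_exp_neg_mul {r : ℝ} (hr : 0 < r) (c : ℝ) :
    ∫ t in Ioi 0, c * exp (-r * t) = c / r := by
  rw [integral_const_mul, integral_exp_mul_Ioi (neg_neg_of_pos hr)]
  simp [div_eq_mul_inv]

section ExponentialSeries

variable {c r : ℕ → ℝ}

lemma summable_integral_norm_mul_exp_neg (hr : ∀ n, 0 < r n) (h : Summable fun n ↦ c n / r n) :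
    Summable fun n ↦ ∫ t in Ioi 0, ‖c n * exp (-r n * t)‖ := by
  refine h.abs.congr fun n ↦ ?_
  simp only [norm_mul, norm_eq_abs, abs_exp]
  rw [integral_const_mul_exp_neg_mul (hr n), abs_div, abs_of_pos (hr n)]

lemma integrableOn_tsum_mul_exp_neg (hr : ∀ n, 0 < r n) (h : Summable fun n ↦ c n / r n) :
    IntegrableOn (fun t ↦ ∑' n, c n * exp (-r n * t)) (Ioi 0) :=
  integrable_tsum_of_summable_integral_norm
    (fun n ↦ integrableOn_const_mul_exp_neg_mul (hr n) (c n))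
    (summable_integral_norm_mul_exp_neg hr h)

lemma integral_tsum_mul_exp_neg (hr : ∀ n, 0 < r n) (h : Summable fun n ↦ c n / r n) :
    ∫ t in Ioi 0, ∑' n, c n * exp (-r n * t) = ∑' n, c n / r n := by
  rw [← integral_tsum_of_summable_integral_norm
    (fun n ↦ integrableOn_const_mul_exp_neg_mul (hr n) (c n))
    (summable_integral_norm_mul_exp_neg hr h)]
  exact tsum_congr fun n ↦ integral_const_mul_exp_neg_mul (hr n) (c n)

end ExponentialSeries

lemma abs_sin_natCast_mul_le (n : ℕ) (θ : ℝ) : |sin (n * θ)| ≤ n * |sin θ| := by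
  induction n with
  | zero => simp
  | succ n ih =>
    calc |sin ((n + 1 : ℕ) * θ)| = |sin (n * θ) * cos θ + cos (n * θ) * sin θ| := by
          rw [Nat.cast_succ, add_mul, one_mul, sin_add]
      _ ≤ |sin (n * θ)| * |cos θ| + |cos (n * θ)| * |sin θ| := by
          simpa only [abs_mul] using abs_add_le (sin (n * θ) * cos θ) (cos (n * θ) * sin θ)
      _ ≤ n * |sin θ| * 1 + 1 * |sin θ| := by
          gcongr
          exacts [abs_cos_le_one θ, abs_cos_le_one _]
      _ = (n + 1 : ℕ) * |sin θ| := by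
          push_cast
          ring

lemma sin_pi_mul_nonneg {x : ℝ} (hx : x ∈ Icc (0 : ℝ) 1) : 0 ≤ sin (π * x) :=
  sin_nonneg_of_nonneg_of_le_pi (mul_nonneg pi_nonneg hx.1) (mul_le_of_le_one_right pi_nonneg hx.2)

lemma sin_pi_mul_mul_sin_pi_mul_le {x y : ℝ} (hx : x ∈ Icc (0 : ℝ) 1) (hy : y ∈ Icc (0 : ℝ) 1) :
    sin (π * x) * sin (π * y) ≤ π ^ 2 * (min x y * (1 - max x y)) := by
  wlog hxy : x ≤ y generalizing x y
  · rw [min_comm, max_comm, mul_comm (sin _)]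
    exact this hy hx (le_of_not_ge hxy)
  rw [min_eq_left hxy, max_eq_right hxy]
  have hsx : sin (π * x) ≤ π * x := sin_le (mul_nonneg pi_nonneg hx.1)
  have hsy : sin (π * y) ≤ π * (1 - y) := by
    rw [← sin_pi_sub, ← mul_one_sub]
    exact sin_le (mul_nonneg pi_nonneg (sub_nonneg.2 hy.2))
  calc sin (π * x) * sin (π * y) ≤ (π * x) * (π * (1 - y)) :=
        mul_le_mul hsx hsy (sin_pi_mul_nonneg hy) (mul_nonneg pi_nonneg hx.1)
    _ = π ^ 2 * (x * (1 - y)) := by ring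

lemma hasSum_cos_div_succ_sq {u : ℝ} (hu : u ∈ Icc (0 : ℝ) 1) :
    HasSum (fun n : ℕ ↦ cos (2 * π * (n + 1) * u) / (n + 1) ^ 2)
      (π ^ 2 * (u ^ 2 - u + 6⁻¹)) := by
  have h := (hasSum_nat_add_iff' 1).2 (hasSum_one_div_nat_pow_mul_cos (k := 1) one_ne_zero hu)
  have hB : (Polynomial.map (algebraMap ℚ ℝ) (Polynomial.bernoulli 2)).eval u = u ^ 2 - u + 6⁻¹ :=
    bernoulliFun_two u
  simp only [mul_one, hB] at h
  convert! h using 1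
  · ext n
    push_cast
    ring
  · rw [Finset.sum_range_one, Nat.factorial_two]
    push_cast
    ring

lemma hasSum_sin_mul_sin_div_succ_sq {x y : ℝ} (hx : x ∈ Icc (0 : ℝ) 1) (hy : y ∈ Icc (0 : ℝ) 1) :
    HasSum (fun n : ℕ ↦ sin (π * (n + 1) * x) * sin (π * (n + 1) * y) / (n + 1) ^ 2)
      (π ^ 2 / 2 * (min x y * (1 - max x y))) := by
  wlog hxy : x ≤ y generalizing x y
  · rw [min_comm, max_comm]
    simpa only [mul_comm (sin (_ * x))] using this hy hx (le_of_not_ge hxy)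
  rw [min_eq_left hxy, max_eq_right hxy]
  have hsub := hasSum_cos_div_succ_sq (u := (y - x) / 2) ⟨by linarith, by linarith [hy.2, hx.1]⟩
  have hadd := hasSum_cos_div_succ_sq (u := (y + x) / 2)
    ⟨by linarith [hx.1, hy.1], by linarith [hy.2, hx.2]⟩
  convert! (hsub.sub hadd).div_const 2 using 1
  · ext n
    rw [show 2 * π * (n + 1) * ((y - x) / 2) = π * (n + 1) * y - π * (n + 1) * x by ring,
      show 2 * π * (n + 1) * ((y + x) / 2) = π * (n + 1) * y + π * (n + 1) * x by ring,
      cos_sub, cos_add]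
    ring
  · ring

section KilledHeatKernel

variable {a t x y : ℝ}

lemma hasSum_pker_cosKernel (ha : 0 < a) (ht : 0 < t) (x y : ℝ) :
    HasSum (fun n : ℕ ↦ exp (-(π ^ 2) * ((n : ℝ) + 1) ^ 2 * t / (2 * a ^ 2)) *
        sin (π * ((n : ℝ) + 1) * x / a) * sin (π * ((n : ℝ) + 1) * y / a))
      ((cosKernel ((x - y) / (2 * a) : ℝ) (π * t / (2 * a ^ 2)) -
        cosKernel ((x + y) / (2 * a) : ℝ) (π * t / (2 * a ^ 2))) / 4) := by
  have hτ : 0 < π * t / (2 * a ^ 2) := by positivity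
  have h := ((hasSum_nat_cosKernel₀ ((x - y) / (2 * a)) hτ).sub
    (hasSum_nat_cosKernel₀ ((x + y) / (2 * a)) hτ)).div_const 4
  rw [sub_sub_sub_cancel_right] at h
  convert! h using 2 with n
  have hsub : 2 * π * ((x - y) / (2 * a)) * (n + 1) =
      π * (n + 1) * x / a - π * (n + 1) * y / a := by
    field_simp
  have hadd : 2 * π * ((x + y) / (2 * a)) * (n + 1) =
      π * (n + 1) * x / a + π * (n + 1) * y / a := by
    field_simp
  have hexp : -π * (n + 1) ^ 2 * (π * t / (2 * a ^ 2)) =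
      -(π ^ 2) * (n + 1) ^ 2 * t / (2 * a ^ 2) := by
    ring
  rw [hsub, hadd, hexp, cos_sub, cos_add]
  ring

theorem pker_eq_cosKernel (ha : 0 < a) (ht : 0 < t) (x y : ℝ) :
    pker a t x y = (cosKernel ((x - y) / (2 * a) : ℝ) (π * t / (2 * a ^ 2)) -
      cosKernel ((x + y) / (2 * a) : ℝ) (π * t / (2 * a ^ 2))) / (2 * a) := by
  rw [pker, (hasSum_pker_cosKernel ha ht x y).tsum_eq]
  field_simp
  ring

theorem pker_nonneg (ha : 0 < a) (ht : 0 < t) (hx : x ∈ Icc 0 a) (hy : y ∈ Icc 0 a) :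
    0 ≤ pker a t x y := by
  have hsin {z : ℝ} (hz : z ∈ Icc 0 a) : 0 ≤ sin (π * (z / a)) :=
    sin_pi_mul_nonneg ⟨div_nonneg hz.1 ha.le, div_le_one_of_le₀ hz.2 ha.le⟩
  have hcos : cos (2 * π * ((x + y) / (2 * a))) ≤ cos (2 * π * ((x - y) / (2 * a))) := by
    rw [show 2 * π * ((x + y) / (2 * a)) = π * (x / a) + π * (y / a) by field_simp,
      show 2 * π * ((x - y) / (2 * a)) = π * (x / a) - π * (y / a) by field_simp,
      cos_add, cos_sub]
    linarith [mul_nonneg (hsin hx) (hsin hy)]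
  rw [pker_eq_cosKernel ha ht]
  exact div_nonneg (sub_nonneg.2 (cosKernel_le_cosKernel hcos (by positivity))) (by positivity)

lemma pker_eq_tsum_mul_exp (a t x y : ℝ) :
    pker a t x y = ∑' n : ℕ, 2 / a * (sin (π * (n + 1) * x / a) * sin (π * (n + 1) * y / a)) *
      exp (-(π ^ 2 * (n + 1) ^ 2 / (2 * a ^ 2)) * t) := by
  rw [pker, ← tsum_mul_left]
  refine tsum_congr fun n ↦ ?_
  rw [show -(π ^ 2) * ((n : ℝ) + 1) ^ 2 * t / (2 * a ^ 2) =
    -(π ^ 2 * (n + 1) ^ 2 / (2 * a ^ 2)) * t by ring]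
  ring

lemma hasSum_pker_coeff_div_rate (ha : 0 < a) (hx : x ∈ Icc 0 a) (hy : y ∈ Icc 0 a) :
    HasSum (fun n : ℕ ↦ 2 / a * (sin (π * (n + 1) * x / a) * sin (π * (n + 1) * y / a)) /
        (π ^ 2 * (n + 1) ^ 2 / (2 * a ^ 2)))
      (2 * (min x y * (a - max x y)) / a) := by
  have hmem {z : ℝ} (hz : z ∈ Icc 0 a) : z / a ∈ Icc (0 : ℝ) 1 :=
    ⟨div_nonneg hz.1 ha.le, div_le_one_of_le₀ hz.2 ha.le⟩
  convert! (hasSum_sin_mul_sin_div_succ_sq (hmem hx) (hmem hy)).mul_left (4 * a / π ^ 2) using 1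
  · ext n
    field_simp
    ring
  · rw [min_div_div_right ha.le, max_div_div_right ha.le]
    field_simp
    ring

theorem integrableOn_pker (ha : 0 < a) (hx : x ∈ Icc 0 a) (hy : y ∈ Icc 0 a) :
    IntegrableOn (fun t ↦ pker a t x y) (Ioi 0) := by
  simp only [pker_eq_tsum_mul_exp]
  exact integrableOn_tsum_mul_exp_neg (fun n ↦ by positivity)
    (hasSum_pker_coeff_div_rate ha hx hy).summable

theorem integral_pker (ha : 0 < a) (hx : x ∈ Icc 0 a) (hy : y ∈ Icc 0 a) :
    ∫ t in Ioi 0, pker a t x y = 2 * (min x y * (a - max x y)) / a := by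
  simp only [pker_eq_tsum_mul_exp]
  rw [integral_tsum_mul_exp_neg (fun n ↦ by positivity)
    (hasSum_pker_coeff_div_rate ha hx hy).summable, (hasSum_pker_coeff_div_rate ha hx hy).tsum_eq]

end KilledHeatKernel

lemma Efun_eq_tsum (t : ℝ) :
    Efun t = ∑' n : ℕ, π ^ 2 * ((n : ℝ) + 2) ^ 2 * exp (-(π ^ 2 * ((n + 2) ^ 2 - 1) / 2) * t) := by
  rw [Efun, ← tsum_mul_left]
  refine tsum_congr fun n ↦ ?_
  rw [show -(π ^ 2) * (((n : ℝ) + 2) ^ 2 - 1) * t / 2 =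
    -(π ^ 2 * ((n + 2) ^ 2 - 1) / 2) * t by ring, mul_assoc]

lemma Efun_nonneg (t : ℝ) : 0 ≤ Efun t := by
  rw [Efun_eq_tsum]
  exact tsum_nonneg fun n ↦ by positivity

lemma two_le_pi_sq : 2 ≤ π ^ 2 := by
  nlinarith [pi_gt_three]

lemma natCast_add_one_le_spectral_gap (n : ℕ) : (n : ℝ) + 1 ≤ π ^ 2 * ((n + 2) ^ 2 - 1) / 2 := by
  have : (0 : ℝ) ≤ n := n.cast_nonneg
  nlinarith [mul_le_mul_of_nonneg_right two_le_pi_sq (show 0 ≤ ((n : ℝ) + 2) ^ 2 - 1 by nlinarith)]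

lemma summable_Efun {t : ℝ} (ht : 0 < t) : Summable fun n : ℕ ↦
    π ^ 2 * ((n : ℝ) + 2) ^ 2 * exp (-(π ^ 2 * ((n + 2) ^ 2 - 1) / 2) * t) := by
  have hgeom : Summable fun n : ℕ ↦ ((n + 2 : ℕ) : ℝ) ^ 2 * exp (-t) ^ (n + 2) :=
    (summable_nat_add_iff (f := fun n : ℕ ↦ (n : ℝ) ^ 2 * exp (-t) ^ n) 2).2 <|
      summable_pow_mul_geometric_of_norm_lt_one 2 (by
        rw [norm_eq_abs, abs_exp, exp_lt_one_iff]
        exact neg_neg_of_pos ht)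
  refine .of_nonneg_of_le (fun n ↦ by positivity) (fun n ↦ ?_)
    (hgeom.mul_left (π ^ 2 * exp t))
  have hexp : exp (-(π ^ 2 * ((n + 2) ^ 2 - 1) / 2) * t) ≤ exp t * exp (-t) ^ (n + 2) := by
    rw [← exp_nat_mul, ← exp_add, exp_le_exp]
    push_cast
    linarith [mul_le_mul_of_nonneg_right (natCast_add_one_le_spectral_gap n) ht.le]
  calc _ ≤ π ^ 2 * ((n : ℝ) + 2) ^ 2 * (exp t * exp (-t) ^ (n + 2)) :=
        mul_le_mul_of_nonneg_left hexp (by positivity)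
    _ = _ := by
        push_cast
        ring

lemma antitoneOn_exp_mul_Efun : AntitoneOn (fun t ↦ exp t * Efun t) (Ioi 0) := by
  intro t ht s hs hts
  simp only [Efun_eq_tsum, ← tsum_mul_left]
  refine ((summable_Efun hs).mul_left _).tsum_le_tsum (fun n ↦ ?_) ((summable_Efun ht).mul_left _)
  rw [mul_left_comm, mul_left_comm (exp t), ← exp_add, ← exp_add]
  have hgap : 1 ≤ π ^ 2 * (((n : ℝ) + 2) ^ 2 - 1) / 2 :=
    le_trans (by simp) (natCast_add_one_le_spectral_gap n)
  refine mul_le_mul_of_nonneg_left (exp_le_exp.2 ?_) (by positivity)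
  nlinarith

/-- The part of `exp (π² s / 2) p¹_s(x, y)` lying above the ground state
`2 sin (π x) sin (π y)`, that is, the contribution of the eigenvalues of index `n ≥ 2`. -/
noncomputable def groundStateRemainder (x y s : ℝ) : ℝ :=
  exp (π ^ 2 * s / 2) * pker 1 s x y - 2 * sin (π * x) * sin (π * y)

section GroundStateRemainder

variable {x y : ℝ}

lemma hasSum_groundStateRemainder {s : ℝ} (hs : 0 < s) (x y : ℝ) :
    HasSum (fun n : ℕ ↦ 2 * exp (-(π ^ 2 * ((n + 2) ^ 2 - 1) / 2) * s) *
        (sin ((n + 2 : ℕ) * (π * x)) * sin ((n + 2 : ℕ) * (π * y))))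
      (groundStateRemainder x y s) := by
  have hexp (m : ℝ) : exp (π ^ 2 * s / 2) * exp (-(π ^ 2) * m ^ 2 * s / (2 * 1 ^ 2)) =
      exp (-(π ^ 2 * (m ^ 2 - 1) / 2) * s) := by
    rw [← exp_add]
    ring_nf
  have h := (hasSum_pker_cosKernel one_pos hs x y).summable.hasSum.mul_left
    (exp (π ^ 2 * s / 2) * (2 / 1))
  rw [mul_assoc, ← pker] at h
  have hground : ∑ n ∈ Finset.range 1, exp (π ^ 2 * s / 2) * (2 / 1) *
      (exp (-(π ^ 2) * ((n : ℝ) + 1) ^ 2 * s / (2 * 1 ^ 2)) * sin (π * ((n : ℝ) + 1) * x / 1) *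
        sin (π * ((n : ℝ) + 1) * y / 1)) = 2 * sin (π * x) * sin (π * y) := by
    have hexp₁ := hexp 1
    simp only [one_pow, sub_self, mul_zero, zero_div, neg_zero, zero_mul, exp_zero] at hexp₁
    simp only [Finset.sum_range_one, Nat.cast_zero, zero_add, one_pow, mul_one, div_one] at hexp₁ ⊢
    linear_combination 2 * sin (π * x) * sin (π * y) * hexp₁
  have htail := (hasSum_nat_add_iff' 1).2 h
  rw [hground, ← groundStateRemainder] at htail
  convert! htail using 2 with n
  have harg (z : ℝ) : (n + 2 : ℕ) * (π * z) = π * (((n + 1 : ℕ) : ℝ) + 1) * z / 1 := by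
    push_cast
    ring
  have hn : (n : ℝ) + 2 = ((n + 1 : ℕ) : ℝ) + 1 := by
    push_cast
    ring
  rw [hn, ← hexp, harg, harg]
  ring

theorem abs_groundStateRemainder_le {s : ℝ} (hs : 0 < s) (hx : x ∈ Icc (0 : ℝ) 1)
    (hy : y ∈ Icc (0 : ℝ) 1) :
    |groundStateRemainder x y s| ≤ Efun s * (sin (π * x) * sin (π * y)) := by
  have hsx := sin_pi_mul_nonneg hx
  have hsy := sin_pi_mul_nonneg hy
  have hpi : 2 ≤ π ^ 2 := two_le_pi_sq
  rw [Efun_eq_tsum, ← tsum_mul_right, ← (hasSum_groundStateRemainder hs x y).tsum_eq]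
  refine tsum_of_norm_bounded (E := ℝ) ((summable_Efun hs).mul_right _).hasSum fun n ↦ ?_
  simp only [norm_mul, Real.norm_eq_abs, abs_two, abs_exp]
  calc _ ≤ π ^ 2 * exp (-(π ^ 2 * ((n + 2) ^ 2 - 1) / 2) * s) *
        ((n + 2 : ℕ) * |sin (π * x)| * ((n + 2 : ℕ) * |sin (π * y)|)) := by
        gcongr
        exacts [abs_sin_natCast_mul_le _ _, abs_sin_natCast_mul_le _ _]
    _ = _ := by
        rw [abs_of_nonneg hsx, abs_of_nonneg hsy]
        push_cast
        ring

lemma abs_groundStateRemainder_le_of_le_one {s : ℝ} (hs : s ∈ Ioc (0 : ℝ) 1)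
    (hx : x ∈ Icc (0 : ℝ) 1) (hy : y ∈ Icc (0 : ℝ) 1) :
    |groundStateRemainder x y s| ≤
      exp (π ^ 2 / 2) * pker 1 s x y + 2 * (sin (π * x) * sin (π * y)) := by
  have hp := pker_nonneg one_pos hs.1 hx hy
  have hss := mul_nonneg (sin_pi_mul_nonneg hx) (sin_pi_mul_nonneg hy)
  have hexp : exp (π ^ 2 * s / 2) ≤ exp (π ^ 2 / 2) :=
    exp_le_exp.2 (by nlinarith [hs.2, sq_nonneg π])
  rw [groundStateRemainder, mul_assoc]
  calc _ ≤ |exp (π ^ 2 * s / 2) * pker 1 s x y| + |2 * (sin (π * x) * sin (π * y))| := abs_sub _ _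
    _ = exp (π ^ 2 * s / 2) * pker 1 s x y + 2 * (sin (π * x) * sin (π * y)) := by
        rw [abs_of_nonneg (by positivity), abs_of_nonneg (by positivity)]
    _ ≤ _ := by gcongr

lemma abs_groundStateRemainder_le_exp_neg {s t : ℝ} (ht : 0 < t) (hts : t ≤ s)
    (hx : x ∈ Icc (0 : ℝ) 1) (hy : y ∈ Icc (0 : ℝ) 1) :
    |groundStateRemainder x y s| ≤
      exp (-s) * (exp t * Efun t * (sin (π * x) * sin (π * y))) := by
  have hss := mul_nonneg (sin_pi_mul_nonneg hx) (sin_pi_mul_nonneg hy)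
  calc |groundStateRemainder x y s| ≤ Efun s * (sin (π * x) * sin (π * y)) :=
        abs_groundStateRemainder_le (ht.trans_le hts) hx hy
    _ = exp (-s) * (exp s * Efun s * (sin (π * x) * sin (π * y))) := by
        rw [exp_neg]
        field_simp
    _ ≤ exp (-s) * (exp t * Efun t * (sin (π * x) * sin (π * y))) := by
        exact mul_le_mul_of_nonneg_left (mul_le_mul_of_nonneg_right
          (antitoneOn_exp_mul_Efun ht (ht.trans_le hts) hts) hss) (exp_pos _).le

lemma aestronglyMeasurable_groundStateRemainder (hx : x ∈ Icc (0 : ℝ) 1)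
    (hy : y ∈ Icc (0 : ℝ) 1) :
    AEStronglyMeasurable (groundStateRemainder x y) (volume.restrict (Ioi 0)) :=
  ((Continuous.aestronglyMeasurable (by fun_prop)).mul
    (integrableOn_pker one_pos hx hy).aestronglyMeasurable).sub aestronglyMeasurable_const

lemma integrableOn_groundStateRemainder_Ioi {t : ℝ} (ht : 0 < t) (hx : x ∈ Icc (0 : ℝ) 1)
    (hy : y ∈ Icc (0 : ℝ) 1) : IntegrableOn (groundStateRemainder x y) (Ioi t) :=
  ((integrableOn_exp_neg_Ioi t).mul_const (exp t * Efun t * (sin (π * x) * sin (π * y)))).mono'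
    ((aestronglyMeasurable_groundStateRemainder hx hy).mono_set (Ioi_subset_Ioi ht.le)) <|
    (ae_restrict_iff' measurableSet_Ioi).2 <| .of_forall fun _ hs ↦
      abs_groundStateRemainder_le_exp_neg ht hs.le hx hy

lemma setIntegral_Ioi_abs_groundStateRemainder_le {t : ℝ} (ht : 0 < t) (hx : x ∈ Icc (0 : ℝ) 1)
    (hy : y ∈ Icc (0 : ℝ) 1) :
    ∫ s in Ioi t, |groundStateRemainder x y s| ≤ Efun t * (sin (π * x) * sin (π * y)) := by
  calc ∫ s in Ioi t, |groundStateRemainder x y s|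
      ≤ ∫ s in Ioi t, exp (-s) * (exp t * Efun t * (sin (π * x) * sin (π * y))) :=
        setIntegral_mono_on (integrableOn_groundStateRemainder_Ioi ht hx hy).abs
          ((integrableOn_exp_neg_Ioi t).mul_const _) measurableSet_Ioi
          fun s hs ↦ abs_groundStateRemainder_le_exp_neg ht hs.le hx hy
    _ = Efun t * (sin (π * x) * sin (π * y)) := by
        rw [integral_mul_const, integral_exp_neg_Ioi, exp_neg]
        field_simp

lemma integrableOn_pker_bound_Ioc (hx : x ∈ Icc (0 : ℝ) 1) (hy : y ∈ Icc (0 : ℝ) 1) :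
    IntegrableOn (fun s ↦ exp (π ^ 2 / 2) * pker 1 s x y + 2 * (sin (π * x) * sin (π * y)))
      (Ioc 0 1) :=
  (((integrableOn_pker one_pos hx hy).mono_set Ioc_subset_Ioi_self).const_mul _).add
    (integrableOn_const (by simp))

lemma integrableOn_groundStateRemainder_Ioc (hx : x ∈ Icc (0 : ℝ) 1) (hy : y ∈ Icc (0 : ℝ) 1) :
    IntegrableOn (groundStateRemainder x y) (Ioc 0 1) :=
  (integrableOn_pker_bound_Ioc hx hy).mono'
    ((aestronglyMeasurable_groundStateRemainder hx hy).mono_set Ioc_subset_Ioi_self) <|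
    (ae_restrict_iff' measurableSet_Ioc).2 <| .of_forall fun _ hs ↦
      abs_groundStateRemainder_le_of_le_one hs hx hy

lemma setIntegral_Ioc_abs_groundStateRemainder_le (hx : x ∈ Icc (0 : ℝ) 1)
    (hy : y ∈ Icc (0 : ℝ) 1) :
    ∫ s in Ioc 0 1, |groundStateRemainder x y s| ≤
      2 * exp (π ^ 2 / 2) * (min x y * (1 - max x y)) + 2 * (sin (π * x) * sin (π * y)) := by
  have hpker := integrableOn_pker one_pos hx hy
  have hpker_le : ∫ s in Ioc 0 1, pker 1 s x y ≤ 2 * (min x y * (1 - max x y)) := by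
    rw [← div_one (2 * _), ← integral_pker one_pos hx hy]
    exact setIntegral_mono_set hpker ((ae_restrict_iff' measurableSet_Ioi).2 <|
      .of_forall fun s hs ↦ pker_nonneg one_pos hs hx hy) Ioc_subset_Ioi_self.eventuallyLE
  calc ∫ s in Ioc 0 1, |groundStateRemainder x y s|
      ≤ ∫ s in Ioc 0 1, (exp (π ^ 2 / 2) * pker 1 s x y + 2 * (sin (π * x) * sin (π * y))) :=
        setIntegral_mono_on (integrableOn_groundStateRemainder_Ioc hx hy).abs
          (integrableOn_pker_bound_Ioc hx hy) measurableSet_Ioc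
          fun s hs ↦ abs_groundStateRemainder_le_of_le_one hs hx hy
    _ = exp (π ^ 2 / 2) * (∫ s in Ioc 0 1, pker 1 s x y) + 2 * (sin (π * x) * sin (π * y)) := by
        rw [integral_add ((hpker.mono_set Ioc_subset_Ioi_self).const_mul _)
          (integrableOn_const (by simp)), integral_const_mul, setIntegral_const]
        simp
    _ ≤ exp (π ^ 2 / 2) * (2 * (min x y * (1 - max x y))) + 2 * (sin (π * x) * sin (π * y)) := by
        gcongr
    _ = _ := by ring

lemma integrableOn_groundStateRemainder (hx : x ∈ Icc (0 : ℝ) 1) (hy : y ∈ Icc (0 : ℝ) 1) :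
    IntegrableOn (groundStateRemainder x y) (Ioi 0) := by
  rw [← Ioc_union_Ioi_eq_Ioi zero_le_one]
  exact (integrableOn_groundStateRemainder_Ioc hx hy).union
    (integrableOn_groundStateRemainder_Ioi one_pos hx hy)

theorem integral_abs_groundStateRemainder_le (hx : x ∈ Icc (0 : ℝ) 1) (hy : y ∈ Icc (0 : ℝ) 1) :
    ∫ s in Ioi 0, |groundStateRemainder x y s| ≤
      (2 * exp (π ^ 2 / 2) + (2 + Efun 1) * π ^ 2) * (min x y * (1 - max x y)) := by
  rw [← Ioc_union_Ioi_eq_Ioi zero_le_one, setIntegral_union (Ioc_disjoint_Ioi le_rfl)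
    measurableSet_Ioi (integrableOn_groundStateRemainder_Ioc hx hy).abs
    (integrableOn_groundStateRemainder_Ioi one_pos hx hy).abs]
  have hIoc := setIntegral_Ioc_abs_groundStateRemainder_le hx hy
  have hIoi := setIntegral_Ioi_abs_groundStateRemainder_le one_pos hx hy
  have hsin := mul_le_mul_of_nonneg_left (sin_pi_mul_mul_sin_pi_mul_le hx hy)
    (add_nonneg zero_le_two (Efun_nonneg 1))
  linarith

theorem Jfun_sub_eq_setIntegral {S : Set ℝ} (hx : x ∈ Icc (0 : ℝ) 1) (hy : y ∈ Icc (0 : ℝ) 1)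
    (hS : S ⊆ Ioi 0) (hfin : volume S < ⊤) :
    Jfun x y S - 2 * (volume S).toReal * sin (π * x) * sin (π * y) =
      ∫ s in S, groundStateRemainder x y s := by
  have hconst : IntegrableOn (fun _ ↦ 2 * sin (π * x) * sin (π * y)) S :=
    integrableOn_const hfin.ne
  have hJ : Jfun x y S =
      ∫ s in S, (groundStateRemainder x y s + 2 * sin (π * x) * sin (π * y)) := by
    simp only [Jfun, groundStateRemainder, sub_add_cancel]
  rw [hJ, integral_add ((integrableOn_groundStateRemainder hx hy).mono_set hS) hconst,
    setIntegral_const, measureReal_def, smul_eq_mul]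
  ring

end GroundStateRemainder

/-- `|J(x,y,S) − 2·λ(S)·sin(πx)·sin(πy)| ≤
C·min( min(x,y)(1−max(x,y)), E_{inf S}·sin(πx)·sin(πy) )`, the second term of
the minimum being discarded (i.e. `+∞`) when `inf S = 0`. -/
theorem stmt9 :
    ∃ C : ℝ, 0 < C ∧ ∀ x ∈ Set.Icc (0:ℝ) 1, ∀ y ∈ Set.Icc (0:ℝ) 1, ∀ S : Set ℝ,
      MeasurableSet S → S ⊆ Set.Ioi 0 → volume S < ⊤ →
      |Jfun x y S - 2 * (volume S).toReal * Real.sin (π * x) * Real.sin (π * y)| ≤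
          C * (min x y * (1 - max x y)) ∧
      (0 < sInf S →
        |Jfun x y S - 2 * (volume S).toReal * Real.sin (π * x) * Real.sin (π * y)| ≤
          C * (Efun (sInf S) * Real.sin (π * x) * Real.sin (π * y))) := by
  have hE := Efun_nonneg 1
  refine ⟨2 * exp (π ^ 2 / 2) + (2 + Efun 1) * π ^ 2, by positivity,
    fun x hx y hy S _ hS hfin ↦ ?_⟩
  have hint := integrableOn_groundStateRemainder hx hy
  rw [Jfun_sub_eq_setIntegral hx hy hS hfin]
  refine ⟨(norm_setIntegral_le_setIntegral_norm_of_subset hint hS).trans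
    (integral_abs_groundStateRemainder_le hx hy), fun hinf ↦ ?_⟩
  have hsub : S ⊆ Ici (sInf S) := fun s hs ↦ csInf_le ⟨0, fun r hr ↦ (hS hr).le⟩ hs
  have hC : 1 ≤ 2 * exp (π ^ 2 / 2) + (2 + Efun 1) * π ^ 2 := by
    nlinarith [one_le_exp (show 0 ≤ π ^ 2 / 2 by positivity), mul_nonneg hE (sq_nonneg π)]
  calc |∫ s in S, groundStateRemainder x y s|
      ≤ ∫ s in Ici (sInf S), |groundStateRemainder x y s| :=
        norm_setIntegral_le_setIntegral_norm_of_subset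
          (hint.mono_set (Ici_subset_Ioi.2 hinf)) hsub
    _ ≤ Efun (sInf S) * (sin (π * x) * sin (π * y)) := by
        rw [integral_Ici_eq_integral_Ioi]
        exact setIntegral_Ioi_abs_groundStateRemainder_le hinf hx hy
    _ ≤ _ := by
        rw [← mul_assoc]
        exact le_mul_of_one_le_left (mul_nonneg (mul_nonneg (Efun_nonneg _)
          (sin_pi_mul_nonneg hx)) (sin_pi_mul_nonneg hy)) hC
end

section
/- For every c > 0 there exists a constant C, depending only on c, such that for every a > 0, every x ∈ (0,a) and every t ≥ 0: ∫_0^t ∫_0^a p^{taboo,a}_s(x,y)·e^{−cy} dy ds ≤ C·( t/a³ + min(1, 1/x) ). -/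
open Real MeasureTheory Set Filter

/-- Transition density of the Brownian taboo process on `(0,a)`. -/
noncomputable def ptaboo (a t x y : ℝ) : ℝ :=
  (Real.sin (π * y / a) / Real.sin (π * x / a)) * Real.exp (π^2 * t / (2 * a^2)) *
    pker a t x y

/-! Write `h y = sin (π y / a)`. The taboo process is Brownian motion killed at the end points of
`(0, a)` and conditioned by `h`, so its generator is `L u = h⁻¹ (½ D² (h u) + ½ (π / a)² h u)`. The
Poisson equation `L u = K - exp (-c y)`, where `K` is the mean of `exp (-c y)` under the invariant
density `2 / a * h²`, has an explicit solution, and a suitable additive constant makes `u ≥ 0`.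
Dynkin's formula for `u` then bounds the double integral by `K t + u x`, where, for fixed `c`,
`K = O(a⁻³)` and `u x = O(min 1 (1 / x))`.

Dynkin's formula is obtained term by term from the sine series of `h u`. Nonnegativity of the
killed heat flow of `h u` follows from that of the killed simple random walk, whose transition
operator has the same sine eigenfunctions. -/

open scoped Topology

theorem integrable_of_hasSum_of_summable_integral_norm {α E : Type*} [MeasurableSpace α]
    {μ : Measure α} [NormedAddCommGroup E] {F : ℕ → α → E} {f : α → E}
    (hF_int : ∀ n, Integrable (F n) μ) (hF_sum : Summable fun n ↦ ∫ x, ‖F n x‖ ∂μ)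
    (h_lim : ∀ᵐ x ∂μ, HasSum (F · x) (f x)) : Integrable f μ := by
  refine ⟨aestronglyMeasurable_of_tendsto_ae atTop
    (fun n ↦ (integrable_finsetSum (Finset.range n) fun i _ ↦ hF_int i).aestronglyMeasurable)
    (h_lim.mono fun x hx ↦ hx.tendsto_sum_nat), ?_⟩
  calc ∫⁻ x, ‖f x‖ₑ ∂μ ≤ ∫⁻ x, ∑' n, ‖F n x‖ₑ ∂μ :=
        lintegral_mono_ae (h_lim.mono fun x hx ↦ hx.tsum_eq ▸ enorm_tsum_le_tsum_enorm)
    _ = ∑' n, ENNReal.ofReal (∫ x, ‖F n x‖ ∂μ) := by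
        rw [lintegral_tsum fun n ↦ (hF_int n).1.enorm]
        simp only [ofReal_integral_norm_eq_lintegral_enorm (hF_int _)]
    _ < ⊤ := hF_sum.tsum_ofReal_lt_top

theorem div_mul_mem_Icc {a b x : ℝ} (ha : 0 < a) (hb : 0 ≤ b) (hx : x ∈ Icc 0 a) :
    b / a * x ∈ Icc 0 b :=
  ⟨mul_nonneg (div_nonneg hb ha.le) hx.1,
    calc b / a * x ≤ b / a * a := by gcongr; exact hx.2
      _ = b := div_mul_cancel₀ b ha.ne'⟩

theorem sin_pi_div_mul_pos {a x : ℝ} (hx : x ∈ Ioo 0 a) : 0 < sin (π / a * x) := by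
  have ha : 0 < a := hx.1.trans hx.2
  refine sin_pos_of_pos_of_lt_pi (mul_pos (by positivity) hx.1) ?_
  calc π / a * x < π / a * a := by gcongr; exact hx.2
    _ = π := div_mul_cancel₀ π ha.ne'

theorem integral_mul_exp_mul (r t : ℝ) : ∫ s in (0 : ℝ)..t, r * exp (r * s) = exp (r * t) - 1 := by
  rw [intervalIntegral.integral_const_mul, intervalIntegral.mul_integral_comp_mul_left]
  simp

/-! ### Positivity of the killed heat flow -/

theorem tendsto_cos_pow_exp {r : ℕ → ℝ} {v : ℝ}
    (hr : Tendsto (fun m : ℕ ↦ m * r m ^ 2) atTop (𝓝 v)) :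
    Tendsto (fun m ↦ cos (r m) ^ m) atTop (𝓝 (exp (-v / 2))) := by
  have hr_sq : Tendsto (fun m ↦ r m ^ 2) atTop (𝓝 0) := by
    refine (hr.div_atTop tendsto_natCast_atTop_atTop).congr' ?_
    filter_upwards [eventually_gt_atTop 0] with m hm
    field_simp
  have hr_zero : Tendsto r atTop (𝓝 0) := by
    simpa [tendsto_zero_iff_abs_tendsto_zero, sqrt_sq_eq_abs, Function.comp_def] using hr_sq.sqrt
  have hsinc : Tendsto (fun m ↦ sinc (r m / 2)) atTop (𝓝 1) := by
    simpa [Function.comp_def] using (continuous_sinc.tendsto _).comp (hr_zero.div_const 2)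
  have hsub (m : ℕ) : m * (cos (r m) - 1) = -(m * r m ^ 2) / 2 * sinc (r m / 2) ^ 2 := by
    rcases eq_or_ne (r m) 0 with h | h
    · simp [h]
    · have hcos : cos (r m) = 1 - 2 * sin (r m / 2) ^ 2 := by
        rw [← mul_div_cancel₀ (r m) two_ne_zero, cos_two_mul, cos_sq']
        ring_nf
      rw [sinc_of_ne_zero (by positivity), hcos]
      field_simp
      ring
  have hlim : Tendsto (fun m : ℕ ↦ m * (cos (r m) - 1)) atTop (𝓝 (-v / 2)) := by
    simpa only [hsub, one_pow, mul_one] using (hr.neg.div_const 2).mul (hsinc.pow 2)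
  exact (tendsto_one_add_pow_exp_of_tendsto hlim).congr fun m ↦ by rw [add_sub_cancel]

theorem norm_mul_cos_pow_mul_sin_le (b θ φ : ℝ) (m : ℕ) : ‖b * cos θ ^ m * sin φ‖ ≤ |b| := by
  rw [mul_assoc, norm_mul, norm_mul, norm_pow]
  exact mul_le_of_le_one_right (abs_nonneg _) <| mul_le_one₀
    (pow_le_one₀ (norm_nonneg _) (abs_cos_le_one _)) (norm_nonneg _) (abs_sin_le_one _)

theorem summable_mul_cos_pow_mul_sin {β : ℕ → ℝ} (hβ : Summable fun n ↦ |β n|) (m : ℕ) (θ φ : ℝ) :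
    Summable fun n : ℕ ↦ β n * cos (n * θ) ^ m * sin (n * φ) :=
  .of_norm_bounded hβ fun _ ↦ norm_mul_cos_pow_mul_sin_le _ _ _ _

theorem tsum_mul_cos_pow_succ_mul_sin {β : ℕ → ℝ} (hβ : Summable fun n ↦ |β n|) (m : ℕ)
    (θ φ : ℝ) :
    ∑' n : ℕ, β n * cos (n * θ) ^ (m + 1) * sin (n * φ) =
      (∑' n : ℕ, β n * cos (n * θ) ^ m * sin (n * (φ + θ)) +
        ∑' n : ℕ, β n * cos (n * θ) ^ m * sin (n * (φ - θ))) / 2 := by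
  rw [← (summable_mul_cos_pow_mul_sin hβ m θ _).tsum_add (summable_mul_cos_pow_mul_sin hβ m θ _),
    ← tsum_div_const]
  congr 1 with n
  rw [mul_add, mul_sub, sin_add, sin_sub]
  ring

-- In sine coefficients, a factor `cos (n * θ)` is one step of the simple random walk on
-- `{0, θ, …, N * θ = π}` killed at the end points, which preserves nonnegativity.
theorem tsum_mul_cos_pow_mul_sin_nonneg {β : ℕ → ℝ} (hβ : Summable fun n ↦ |β n|) {N : ℕ} {θ : ℝ}
    (hθ : N * θ = π) (h : ∀ k ≤ N, 0 ≤ ∑' n : ℕ, β n * sin (n * (k * θ))) (m : ℕ) :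
    ∀ k ≤ N, 0 ≤ ∑' n : ℕ, β n * cos (n * θ) ^ m * sin (n * (k * θ)) := by
  induction m with
  | zero => simpa using h
  | succ m ih =>
    intro k hk
    rcases Nat.eq_zero_or_pos k with rfl | hk_pos
    · simp
    rcases hk.eq_or_lt with rfl | hk_lt
    · simp [hθ, sin_nat_mul_pi]
    · have hright := ih (k + 1) hk_lt
      have hleft := ih (k - 1) (by omega)
      rw [Nat.cast_add_one, add_one_mul] at hright
      rw [Nat.cast_pred hk_pos, sub_one_mul] at hleft
      rw [tsum_mul_cos_pow_succ_mul_sin hβ]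
      positivity

theorem exists_tendsto_mul_pi_div_sq {τ : ℝ} (hτ : 0 < τ) :
    ∃ N : ℕ → ℕ, Tendsto N atTop atTop ∧
      Tendsto (fun m : ℕ ↦ m * (π / N m) ^ 2) atTop (𝓝 τ) := by
  have hX : Tendsto (fun m : ℕ ↦ √(m / τ)) atTop atTop :=
    tendsto_sqrt_atTop.comp (tendsto_natCast_atTop_atTop.atTop_div_const hτ)
  refine ⟨fun m ↦ ⌈π * √(m / τ)⌉₊, tendsto_nat_ceil_atTop.comp (hX.const_mul_atTop pi_pos), ?_⟩
  have hratio : Tendsto (fun m : ℕ ↦ ⌈π * √(m / τ)⌉₊ / √(m / τ)) atTop (𝓝 π) :=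
    (tendsto_nat_ceil_mul_div_atTop pi_pos.le).comp hX
  have hlim : Tendsto (fun m : ℕ ↦ τ * (π / (⌈π * √(m / τ)⌉₊ / √(m / τ))) ^ 2) atTop (𝓝 τ) := by
    simpa only [div_self pi_ne_zero, one_pow, mul_one, Pi.div_apply] using
      (((tendsto_const_nhds (x := π)).div hratio pi_ne_zero).pow 2).const_mul τ
  refine hlim.congr fun m ↦ ?_
  have hsq : τ * √(m / τ) ^ 2 = m := by rw [sq_sqrt (by positivity)]; field_simp
  rw [div_div_eq_mul_div, mul_div_right_comm, mul_pow, mul_left_comm, hsq, mul_comm]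

-- Diffusive limit of the killed random walk: `m` steps of size `π / N m`, with `m * (π / N m) ^ 2`
-- tending to the time `τ`.
theorem tsum_mul_exp_mul_sin_nonneg {β : ℕ → ℝ} (hβ : Summable fun n ↦ |β n|)
    (h : ∀ θ ∈ Icc 0 π, 0 ≤ ∑' n : ℕ, β n * sin (n * θ)) {θ τ : ℝ} (hθ : θ ∈ Icc 0 π)
    (hτ : 0 < τ) : 0 ≤ ∑' n : ℕ, β n * exp (-(n ^ 2 * τ) / 2) * sin (n * θ) := by
  obtain ⟨N, hN, hNτ⟩ := exists_tendsto_mul_pi_div_sq hτ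
  have hN' : Tendsto (fun m ↦ (N m : ℝ)) atTop atTop := tendsto_natCast_atTop_atTop.comp hN
  let k (m : ℕ) : ℕ := ⌊θ / π * N m⌋₊
  have hk : Tendsto (fun m ↦ k m * (π / N m)) atTop (𝓝 θ) := by
    have hfloor := ((tendsto_nat_floor_mul_div_atTop
      (div_nonneg hθ.1 pi_pos.le)).comp hN').mul_const π
    rw [div_mul_cancel₀ _ pi_ne_zero] at hfloor
    exact hfloor.congr fun m ↦ by simp only [Function.comp_apply, k]; ring
  have hlim : Tendsto
      (fun m ↦ ∑' n : ℕ, β n * cos (n * (π / N m)) ^ m * sin (n * (k m * (π / N m)))) atTop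
      (𝓝 (∑' n : ℕ, β n * exp (-(n ^ 2 * τ) / 2) * sin (n * θ))) := by
    refine tendsto_tsum_of_dominated_convergence hβ (fun n ↦ ?_) (.of_forall fun m n ↦ ?_)
    · have hcos : Tendsto (fun m : ℕ ↦ cos (n * (π / N m)) ^ m) atTop
          (𝓝 (exp (-(n ^ 2 * τ) / 2))) :=
        tendsto_cos_pow_exp ((hNτ.const_mul ((n : ℝ) ^ 2)).congr fun m ↦ by ring)
      exact (hcos.const_mul (β n)).mul ((continuous_sin.tendsto _).comp (hk.const_mul (n : ℝ)))
    · exact norm_mul_cos_pow_mul_sin_le _ _ _ _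
  refine ge_of_tendsto hlim ?_
  filter_upwards [hN.eventually_gt_atTop 0] with m hm
  have hNm : (0 : ℝ) < N m := by exact_mod_cast hm
  refine tsum_mul_cos_pow_mul_sin_nonneg hβ (mul_div_cancel₀ _ hNm.ne') (fun j hj ↦ ?_) m (k m) ?_
  · refine h _ ⟨by positivity, ?_⟩
    have hj' : (j : ℝ) ≤ N m := by exact_mod_cast hj
    calc j * (π / N m) ≤ N m * (π / N m) := by gcongr
      _ = π := mul_div_cancel₀ _ hNm.ne'
  · exact Nat.floor_le_of_le (mul_le_of_le_one_left hNm.le ((div_le_one pi_pos).2 hθ.2))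

/-! ### Sine series -/

/-- The odd function on the real line that agrees on `[0, ∞)` with a function `f` vanishing at `0`.
Truncating with `max`, instead of splitting at `0`, preserves continuity. -/
noncomputable def oddReflection (f : ℝ → ℝ) (y : ℝ) : ℝ := f (max y 0) - f (max (-y) 0)

theorem oddReflection_of_nonneg {f : ℝ → ℝ} (hf : f 0 = 0) {y : ℝ} (hy : 0 ≤ y) :
    oddReflection f y = f y := by
  simp [oddReflection, hy, hf]

theorem oddReflection_neg (f : ℝ → ℝ) (y : ℝ) : oddReflection f (-y) = -oddReflection f y := by
  simp [oddReflection]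

theorem continuous_oddReflection {f : ℝ → ℝ} (hf : Continuous f) :
    Continuous (oddReflection f) := by
  unfold oddReflection
  fun_prop

theorem integral_cexp_mul_of_odd {F : ℝ → ℝ} (hF : Continuous F) (hodd : ∀ y, F (-y) = -F y)
    (a w : ℝ) :
    ∫ y in -a..a, Complex.exp (-((w * y : ℝ) * Complex.I)) * F y =
      -2 * Complex.I * ((∫ y in 0..a, F y * sin (w * y) : ℝ) : ℂ) := by
  let G (y : ℝ) : ℂ := Complex.exp (-((w * y : ℝ) * Complex.I)) * F y
  have hG : Continuous G := by fun_prop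
  have hG' : Continuous fun y ↦ G (-y) := hG.comp continuous_neg
  calc ∫ y in -a..a, G y = (∫ y in -a..0, G y) + ∫ y in 0..a, G y :=
        (intervalIntegral.integral_add_adjacent_intervals (hG.intervalIntegrable _ _)
          (hG.intervalIntegrable _ _)).symm
    _ = (∫ y in 0..a, G (-y)) + ∫ y in 0..a, G y := by
        rw [intervalIntegral.integral_comp_neg, neg_zero]
    _ = ∫ y in 0..a, -2 * Complex.I * ((F y * sin (w * y) : ℝ) : ℂ) := by
        rw [← intervalIntegral.integral_add (hG'.intervalIntegrable _ _)
          (hG.intervalIntegrable _ _)]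
        refine intervalIntegral.integral_congr fun y _ ↦ ?_
        simp only [G, hodd, mul_neg, Complex.ofReal_neg, neg_neg, neg_mul, Complex.ofReal_mul,
          Complex.ofReal_sin]
        rw [Complex.exp_mul_I, ← neg_mul (_ * _) Complex.I, Complex.exp_mul_I, Complex.cos_neg,
          Complex.sin_neg]
        ring
    _ = _ := by rw [intervalIntegral.integral_const_mul, intervalIntegral.integral_ofReal]

theorem fourierCoeff_liftIco_oddReflection {a : ℝ} [Fact (0 < 2 * a)] (ha : 0 < a) {f : ℝ → ℝ}
    (hf : Continuous f) (hf_zero : f 0 = 0) (n : ℤ) :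
    fourierCoeff (AddCircle.liftIco (2 * a) (-a) fun y ↦ (oddReflection f y : ℂ)) n =
      -(Complex.I / a) * ((∫ y in 0..a, f y * sin (n * (π / a * y)) : ℝ) : ℂ) := by
  have ha' : (a : ℂ) ≠ 0 := by exact_mod_cast ha.ne'
  have hend : -a + 2 * a = a := by ring
  have hfourier : ∀ y ∈ Ioo (-a) (-a + 2 * a),
      fourier (-n) (y : AddCircle (2 * a)) • AddCircle.liftIco (2 * a) (-a)
        (fun y ↦ (oddReflection f y : ℂ)) y =
      Complex.exp (-((n * (π / a) * y : ℝ) * Complex.I)) * oddReflection f y := fun y hy ↦ by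
    rw [AddCircle.liftIco_coe_apply ⟨hy.1.le, hy.2⟩, fourier_coe_apply, smul_eq_mul]
    congr 2
    push_cast
    field_simp
  have hhalf : ∫ y in 0..a, oddReflection f y * sin (n * (π / a) * y) =
      ∫ y in 0..a, f y * sin (n * (π / a * y)) := by
    refine intervalIntegral.integral_congr fun y hy ↦ ?_
    rw [uIcc_of_le ha.le] at hy
    simp only [oddReflection_of_nonneg hf_zero hy.1, mul_assoc]
  rw [fourierCoeff_eq_intervalIntegral _ _ (-a),
    intervalIntegral.integral_congr_Ioo_of_le (by linarith) hfourier, hend,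
    integral_cexp_mul_of_odd (continuous_oddReflection hf) (oddReflection_neg f), hhalf,
    Complex.real_smul]
  push_cast
  field_simp

/-- The `n`-th coefficient of the Fourier sine series of `f` on `(0, a)`. The coefficient with
index `0` vanishes; keeping it makes the sine series a sum over `ℕ`. -/
noncomputable def sineCoeff (a : ℝ) (f : ℝ → ℝ) (n : ℕ) : ℝ :=
  2 / a * ∫ y in 0..a, f y * sin (n * (π / a * y))

theorem sin_nat_mul_pi_div_mul_self {a : ℝ} (ha : a ≠ 0) (n : ℕ) : sin (n * (π / a * a)) = 0 := by
  rw [div_mul_cancel₀ _ ha, sin_nat_mul_pi]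

theorem continuous_liftIco_oddReflection {a : ℝ} [Fact (0 < 2 * a)] (ha : 0 < a) {f : ℝ → ℝ}
    (hf : Continuous f) (hf_zero : f 0 = 0) (hf_a : f a = 0) :
    Continuous (AddCircle.liftIco (2 * a) (-a) fun y ↦ (oddReflection f y : ℂ)) := by
  have hend : -a + 2 * a = a := by ring
  refine AddCircle.liftIco_continuous ?_
    (Complex.continuous_ofReal.comp (continuous_oddReflection hf)).continuousOn
  simp [hend, oddReflection_neg, oddReflection_of_nonneg hf_zero ha.le, hf_a]

theorem fourier_sub_fourier_neg {a : ℝ} (ha : a ≠ 0) (n : ℕ) (y : ℝ) :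
    fourier n (y : AddCircle (2 * a)) - fourier (-n : ℤ) (y : AddCircle (2 * a)) =
      2 * Complex.I * Complex.sin (n * (π / a * y)) := by
  have ha' : (a : ℂ) ≠ 0 := by exact_mod_cast ha
  have hpos : 2 * (π : ℂ) * Complex.I * ((n : ℤ) : ℂ) * y / ((2 * a : ℝ) : ℂ) =
      (n * (π / a * y) : ℂ) * Complex.I := by push_cast; field_simp
  have hneg : 2 * (π : ℂ) * Complex.I * ((-(n : ℤ) : ℤ) : ℂ) * y / ((2 * a : ℝ) : ℂ) =
      -(n * (π / a * y) : ℂ) * Complex.I := by push_cast; field_simp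
  rw [fourier_coe_apply, fourier_coe_apply, hpos, hneg, Complex.exp_mul_I, Complex.exp_mul_I,
    Complex.cos_neg, Complex.sin_neg]
  ring

theorem hasSum_sineCoeff_of_lt {a : ℝ} (ha : 0 < a) {f : ℝ → ℝ} (hf : Continuous f)
    (hf_zero : f 0 = 0) (hf_a : f a = 0) (hsum : Summable fun n ↦ |sineCoeff a f n|) {y : ℝ}
    (hy : y ∈ Ico 0 a) : HasSum (fun n : ℕ ↦ sineCoeff a f n * sin (n * (π / a * y))) (f y) := by
  have : Fact (0 < 2 * a) := ⟨by positivity⟩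
  let F : C(AddCircle (2 * a), ℂ) :=
    ⟨AddCircle.liftIco (2 * a) (-a) fun y ↦ (oddReflection f y : ℂ),
      continuous_liftIco_oddReflection ha hf hf_zero hf_a⟩
  have hcoeff (n : ℕ) : fourierCoeff F n = -(Complex.I / 2) * sineCoeff a f n := by
    simp only [F, ContinuousMap.coe_mk, fourierCoeff_liftIco_oddReflection ha hf hf_zero, sineCoeff]
    push_cast
    ring
  have hcoeff_neg (n : ℕ) : fourierCoeff F (-n) = Complex.I / 2 * sineCoeff a f n := by
    simp only [F, ContinuousMap.coe_mk, fourierCoeff_liftIco_oddReflection ha hf hf_zero, sineCoeff,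
      Int.cast_neg, Int.cast_natCast, neg_mul, sin_neg, mul_neg, intervalIntegral.integral_neg]
    push_cast
    ring
  have hcoeff_zero : fourierCoeff F 0 = 0 := by simpa [sineCoeff] using hcoeff 0
  have hsum_fourier : Summable (fourierCoeff F) := by
    have hsumℂ : Summable fun n ↦ (sineCoeff a f n : ℂ) := .of_norm (by simpa using hsum)
    exact .of_nat_of_neg (by simpa only [hcoeff] using hsumℂ.mul_left _)
      (by simpa only [hcoeff_neg] using hsumℂ.mul_left _)
  have hseries := (has_pointwise_sum_fourier_series_of_summable hsum_fourier
    (y : AddCircle (2 * a))).nat_add_neg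
  have hFy : F (y : AddCircle (2 * a)) = f y := by
    simp only [F, ContinuousMap.coe_mk]
    rw [AddCircle.liftIco_coe_apply ⟨by linarith [hy.1], by linarith [hy.2]⟩,
      oddReflection_of_nonneg hf_zero hy.1]
  simp only [hcoeff, hcoeff_neg, hcoeff_zero, smul_eq_mul, zero_mul, add_zero, hFy] at hseries
  refine Complex.hasSum_ofReal.1 (hseries.congr_fun fun n ↦ ?_)
  push_cast
  linear_combination (sineCoeff a f n : ℂ) * Complex.I / 2 * fourier_sub_fourier_neg ha.ne' n y +
    (sineCoeff a f n : ℂ) * Complex.sin (n * (π / a * y)) * Complex.I_sq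

theorem hasSum_sineCoeff {a : ℝ} (ha : 0 < a) {f : ℝ → ℝ} (hf : Continuous f)
    (hf_zero : f 0 = 0) (hf_a : f a = 0) (hsum : Summable fun n ↦ |sineCoeff a f n|) {y : ℝ}
    (hy : y ∈ Icc 0 a) : HasSum (fun n : ℕ ↦ sineCoeff a f n * sin (n * (π / a * y))) (f y) := by
  rcases hy.2.eq_or_lt with rfl | hlt
  · simpa only [sin_nat_mul_pi_div_mul_self ha.ne', mul_zero, hf_a] using hasSum_zero
  · exact hasSum_sineCoeff_of_lt ha hf hf_zero hf_a hsum ⟨hy.1, hlt⟩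

theorem contDiff_one_deriv {f : ℝ → ℝ} (hf : ContDiff ℝ 2 f) : ContDiff ℝ 1 (deriv f) :=
  ContDiff.deriv' (by rwa [one_add_one_eq_two])

theorem continuous_deriv_deriv {f : ℝ → ℝ} (hf : ContDiff ℝ 2 f) : Continuous (deriv (deriv f)) :=
  (contDiff_one_deriv hf).continuous_deriv le_rfl

theorem continuous_deriv_deriv_div_two_add {f : ℝ → ℝ} (hf : ContDiff ℝ 2 f) (r : ℝ) :
    Continuous fun y ↦ deriv (deriv f) y / 2 + r * f y :=
  ((continuous_deriv_deriv hf).div_const 2).add (hf.continuous.const_mul r)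

theorem sineCoeff_deriv_deriv {a : ℝ} (ha : a ≠ 0) {f : ℝ → ℝ} (hf : ContDiff ℝ 2 f)
    (hf_zero : f 0 = 0) (hf_a : f a = 0) (n : ℕ) :
    sineCoeff a (deriv (deriv f)) n = -(n * (π / a)) ^ 2 * sineCoeff a f n := by
  have hf'' : Continuous fun y ↦ deriv (deriv f) y * sin (n * (π / a * y)) :=
    (continuous_deriv_deriv hf).mul (by fun_prop)
  have hf_sin : Continuous fun y ↦ (n * (π / a)) ^ 2 * (f y * sin (n * (π / a * y))) :=
    continuous_const.mul (hf.continuous.mul (by fun_prop))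
  have hderiv (y : ℝ) : HasDerivAt (fun y ↦ deriv f y * sin (n * (π / a * y)) -
      f y * (cos (n * (π / a * y)) * (n * (π / a))))
      (deriv (deriv f) y * sin (n * (π / a * y)) +
        (n * (π / a)) ^ 2 * (f y * sin (n * (π / a * y)))) y := by
    have hlin : HasDerivAt (fun y : ℝ ↦ n * (π / a * y)) (n * (π / a)) y := by
      simpa using ((hasDerivAt_id y).const_mul (π / a)).const_mul (n : ℝ)
    have hf₁ := (hf.differentiable two_ne_zero y).hasDerivAt
    have hf₂ := ((contDiff_one_deriv hf).differentiable one_ne_zero y).hasDerivAt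
    refine ((hf₂.mul hlin.sin).sub (hf₁.mul (hlin.cos.mul_const (n * (π / a))))).congr_deriv ?_
    ring
  have hftc := intervalIntegral.integral_eq_sub_of_hasDerivAt (a := 0) (b := a)
    (fun y _ ↦ hderiv y) ((hf''.add hf_sin).intervalIntegrable _ _)
  rw [intervalIntegral.integral_add (hf''.intervalIntegrable _ _)
    (hf_sin.intervalIntegrable _ _), intervalIntegral.integral_const_mul] at hftc
  simp only [hf_zero, hf_a, sin_nat_mul_pi_div_mul_self ha, mul_zero, sin_zero, zero_mul,
    sub_zero] at hftc
  rw [sineCoeff, sineCoeff]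
  linear_combination 2 / a * hftc

theorem abs_sineCoeff_le {a : ℝ} (ha : 0 < a) {f : ℝ → ℝ} (hf : IntervalIntegrable f volume 0 a)
    (n : ℕ) : |sineCoeff a f n| ≤ 2 / a * ∫ y in 0..a, |f y| := by
  rw [sineCoeff, abs_mul, abs_of_pos (by positivity)]
  gcongr
  refine (intervalIntegral.abs_integral_le_integral_abs ha.le).trans ?_
  refine intervalIntegral.integral_mono_on ha.le
    (hf.mul_continuousOn (by fun_prop)).abs hf.abs fun y _ ↦ ?_
  rw [abs_mul]
  exact mul_le_of_le_one_right (abs_nonneg _) (abs_sin_le_one _)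

theorem summable_abs_sineCoeff {a : ℝ} (ha : 0 < a) {f : ℝ → ℝ} (hf : ContDiff ℝ 2 f)
    (hf_zero : f 0 = 0) (hf_a : f a = 0) : Summable fun n ↦ |sineCoeff a f n| := by
  set B := 2 / a * ∫ y in 0..a, |deriv (deriv f) y|
  have hpow : Summable fun n : ℕ ↦ B / (π / a) ^ 2 * (1 / (n : ℝ) ^ 2) :=
    (summable_one_div_nat_pow.2 one_lt_two).mul_left _
  refine .of_nonneg_of_le (fun _ ↦ abs_nonneg _) (fun n ↦ ?_) hpow
  rcases Nat.eq_zero_or_pos n with rfl | hn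
  · simp [sineCoeff]
  have hB := abs_sineCoeff_le ha ((continuous_deriv_deriv hf).intervalIntegrable 0 a) n
  rw [sineCoeff_deriv_deriv ha.ne' hf hf_zero hf_a, abs_mul, abs_neg, abs_sq] at hB
  have hpos : 0 < (n * (π / a)) ^ 2 := by positivity
  calc |sineCoeff a f n| ≤ B / (n * (π / a)) ^ 2 := by rwa [le_div_iff₀' hpos]
    _ = B / (π / a) ^ 2 * (1 / (n : ℝ) ^ 2) := by rw [mul_pow]; field_simp

theorem sineCoeff_add {a : ℝ} {f g : ℝ → ℝ} (hf : IntervalIntegrable f volume 0 a)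
    (hg : IntervalIntegrable g volume 0 a) (n : ℕ) :
    sineCoeff a (fun y ↦ f y + g y) n = sineCoeff a f n + sineCoeff a g n := by
  simp only [sineCoeff, add_mul]
  rw [intervalIntegral.integral_add (hf.mul_continuousOn (by fun_prop))
    (hg.mul_continuousOn (by fun_prop)), mul_add]

theorem sineCoeff_const_mul (a r : ℝ) (f : ℝ → ℝ) (n : ℕ) :
    sineCoeff a (fun y ↦ r * f y) n = r * sineCoeff a f n := by
  simp only [sineCoeff, mul_assoc r, intervalIntegral.integral_const_mul]
  ring

/-! ### The killed semigroup -/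

theorem pker_eq_tsum (a t x y : ℝ) :
    pker a t x y = 2 / a * ∑' n : ℕ, exp (-(n * (π / a)) ^ 2 / 2 * t) * sin (n * (π / a * x)) *
      sin (n * (π / a * y)) := by
  rw [pker, ← (add_left_injective 1).tsum_eq (f := fun n : ℕ ↦ exp (-(n * (π / a)) ^ 2 / 2 * t) *
    sin (n * (π / a * x)) * sin (n * (π / a * y)))]
  · refine congrArg _ (tsum_congr fun n ↦ ?_)
    rw [show -π ^ 2 * ((n : ℝ) + 1) ^ 2 * t / (2 * a ^ 2) =
        -(((n + 1 : ℕ) : ℝ) * (π / a)) ^ 2 / 2 * t by push_cast; ring,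
      show π * ((n : ℝ) + 1) * x / a = ((n + 1 : ℕ) : ℝ) * (π / a * x) by push_cast; ring,
      show π * ((n : ℝ) + 1) * y / a = ((n + 1 : ℕ) : ℝ) * (π / a * y) by push_cast; ring]
  · rintro (_ | n) hn
    · simp at hn
    · exact ⟨n, rfl⟩

theorem summable_exp_neg_nat_mul_sq_mul {ω t : ℝ} (hω : ω ≠ 0) (ht : 0 < t) :
    Summable fun n : ℕ ↦ exp (-(n * ω) ^ 2 / 2 * t) := by
  have hneg : -(ω ^ 2 / 2 * t) < 0 := neg_lt_zero.2 (by positivity)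
  refine (summable_exp_nat_mul_of_ge hneg (f := fun n ↦ (n : ℝ) ^ 2)
    fun n ↦ by exact_mod_cast Nat.le_self_pow two_ne_zero n).congr fun n ↦ ?_
  congr 1
  ring

theorem hasSum_pker {a t : ℝ} (ha : 0 < a) (ht : 0 < t) (x y : ℝ) :
    HasSum (fun n : ℕ ↦ 2 / a * (exp (-(n * (π / a)) ^ 2 / 2 * t) * sin (n * (π / a * x)) *
      sin (n * (π / a * y)))) (pker a t x y) := by
  have hsum : Summable fun n : ℕ ↦
      exp (-(n * (π / a)) ^ 2 / 2 * t) * sin (n * (π / a * x)) * sin (n * (π / a * y)) := by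
    refine .of_norm_bounded (summable_exp_neg_nat_mul_sq_mul (div_pos pi_pos ha).ne' ht) fun n ↦ ?_
    rw [mul_assoc, norm_mul, norm_mul, norm_eq_abs, abs_exp]
    exact mul_le_of_le_one_right (exp_pos _).le
      (mul_le_one₀ (abs_sin_le_one _) (norm_nonneg _) (abs_sin_le_one _))
  rw [pker_eq_tsum]
  exact hsum.hasSum.mul_left _

/-- The semigroup of Brownian motion killed upon exiting `(0, a)`: the integral operator whose
kernel is the transition density `pker a t`. -/
noncomputable def killedSemigroup (a t : ℝ) (f : ℝ → ℝ) (x : ℝ) : ℝ :=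
  ∫ y in 0..a, pker a t x y * f y

theorem hasSum_killedSemigroup {a t : ℝ} (ha : 0 < a) (ht : 0 < t) {f : ℝ → ℝ}
    (hf : IntervalIntegrable f volume 0 a) (x : ℝ) :
    HasSum (fun n : ℕ ↦ sineCoeff a f n * exp (-(n * (π / a)) ^ 2 / 2 * t) *
      sin (n * (π / a * x))) (killedSemigroup a t f x) := by
  let e (n : ℕ) : ℝ := exp (-(n * (π / a)) ^ 2 / 2 * t)
  let F (n : ℕ) (y : ℝ) : ℝ :=
    2 / a * (e n * sin (n * (π / a * x)) * sin (n * (π / a * y))) * f y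
  have hF_le (n : ℕ) (y : ℝ) : ‖F n y‖ ≤ e n * (2 / a * |f y|) := by
    calc ‖F n y‖ = 2 / a * (e n * |sin (n * (π / a * x))| * |sin (n * (π / a * y))|) * |f y| := by
          simp only [F, e, norm_eq_abs, abs_mul, abs_exp, abs_of_pos (div_pos two_pos ha)]
      _ ≤ 2 / a * (e n * 1 * 1) * |f y| := by gcongr <;> exact abs_sin_le_one _
      _ = e n * (2 / a * |f y|) := by ring
  have he : Summable e := summable_exp_neg_nat_mul_sq_mul (div_pos pi_pos ha).ne' ht
  have hbound : IntervalIntegrable (fun y ↦ ∑' n, e n * (2 / a * |f y|)) volume 0 a := by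
    simp only [tsum_mul_right]
    exact (hf.abs.const_mul _).const_mul _
  have hF_meas (n : ℕ) : AEStronglyMeasurable (F n) (volume.restrict (uIoc 0 a)) :=
    (Continuous.aestronglyMeasurable (by fun_prop)).mul hf.aestronglyMeasurable_restrict_uIoc
  refine (intervalIntegral.hasSum_integral_of_dominated_convergence _ hF_meas
    (fun n ↦ .of_forall fun y _ ↦ hF_le n y) (.of_forall fun y _ ↦ he.mul_right _) hbound
    (.of_forall fun y _ ↦ (hasSum_pker ha ht x y).mul_right (f y))).congr_fun fun n ↦ ?_
  simp only [F, e, sineCoeff]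
  rw [mul_assoc, ← intervalIntegral.integral_const_mul, ← intervalIntegral.integral_mul_const]
  congr 1 with y
  ring

theorem killedSemigroup_add {a t : ℝ} (ha : 0 < a) (ht : 0 < t) {f g : ℝ → ℝ}
    (hf : IntervalIntegrable f volume 0 a) (hg : IntervalIntegrable g volume 0 a) (x : ℝ) :
    killedSemigroup a t (fun y ↦ f y + g y) x =
      killedSemigroup a t f x + killedSemigroup a t g x := by
  refine (hasSum_killedSemigroup ha ht (hf.add hg) x).unique
    (((hasSum_killedSemigroup ha ht hf x).add (hasSum_killedSemigroup ha ht hg x)).congr_fun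
      fun n ↦ ?_)
  rw [sineCoeff_add hf hg]
  ring

theorem killedSemigroup_const_mul (a t r : ℝ) (f : ℝ → ℝ) (x : ℝ) :
    killedSemigroup a t (fun y ↦ r * f y) x = r * killedSemigroup a t f x := by
  simp only [killedSemigroup, mul_left_comm _ r, intervalIntegral.integral_const_mul]

theorem killedSemigroup_nonneg {a t : ℝ} (ha : 0 < a) (ht : 0 < t) {f : ℝ → ℝ}
    (hf : ContDiff ℝ 2 f) (hf_zero : f 0 = 0) (hf_a : f a = 0) (hf_nonneg : ∀ y ∈ Icc 0 a, 0 ≤ f y)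
    {x : ℝ} (hx : x ∈ Icc 0 a) : 0 ≤ killedSemigroup a t f x := by
  have hsum := summable_abs_sineCoeff ha hf hf_zero hf_a
  have hnonneg : ∀ θ ∈ Icc 0 π, 0 ≤ ∑' n : ℕ, sineCoeff a f n * sin (n * θ) := fun θ hθ ↦ by
    have hy : a / π * θ ∈ Icc 0 a := div_mul_mem_Icc pi_pos ha.le hθ
    have hθ_eq : π / a * (a / π * θ) = θ := by field_simp
    have hseries := hasSum_sineCoeff ha hf.continuous hf_zero hf_a hsum hy
    rw [hθ_eq] at hseries
    rw [hseries.tsum_eq]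
    exact hf_nonneg _ hy
  convert tsum_mul_exp_mul_sin_nonneg hsum hnonneg
    (div_mul_mem_Icc ha pi_pos.le hx) (mul_pos (pow_pos (div_pos pi_pos ha) 2) ht) using 1
  rw [← (hasSum_killedSemigroup ha ht (hf.continuous.intervalIntegrable _ _) x).tsum_eq]
  congr! 5 with n
  ring

theorem integral_abs_mul_exp_mul (r : ℝ) {t : ℝ} (ht : 0 ≤ t) :
    ∫ s in 0..t, |r * exp (r * s)| = |exp (r * t) - 1| := by
  have hnonneg : 0 ≤ ∫ s in 0..t, exp (r * s) :=
    intervalIntegral.integral_nonneg ht fun _ _ ↦ (exp_pos _).le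
  rw [← integral_mul_exp_mul, intervalIntegral.integral_const_mul, abs_mul, abs_of_nonneg hnonneg]
  simp only [abs_mul, abs_exp, intervalIntegral.integral_const_mul]

theorem abs_exp_sub_one_le_exp {u v : ℝ} (huv : u ≤ v) (hv : 0 ≤ v) : |exp u - 1| ≤ exp v := by
  have hexp := exp_le_exp.2 huv
  have hone := one_le_exp hv
  rw [abs_le]
  constructor <;> linarith [exp_pos u]

theorem summable_integral_norm_mul_exp_mul {β ρ σ : ℕ → ℝ} {b t : ℝ}
    (hβ : Summable fun n ↦ |β n|) (hρ : ∀ n, ρ n ≤ b) (hb : 0 ≤ b) (hσ : ∀ n, |σ n| ≤ 1)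
    (ht : 0 ≤ t) :
    Summable fun n ↦ ∫ s in Ioc 0 t, ‖β n * (ρ n * exp (ρ n * s)) * σ n‖ := by
  refine .of_nonneg_of_le (fun n ↦ by positivity) (fun n ↦ ?_) (hβ.mul_right (exp (b * t)))
  calc ∫ s in Ioc 0 t, ‖β n * (ρ n * exp (ρ n * s)) * σ n‖
      = |β n| * |exp (ρ n * t) - 1| * |σ n| := by
        rw [← intervalIntegral.integral_of_le ht]
        simp only [norm_mul _ (σ _), norm_mul (β _), norm_eq_abs]
        rw [intervalIntegral.integral_mul_const, intervalIntegral.integral_const_mul,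
          integral_abs_mul_exp_mul _ ht]
    _ ≤ |β n| * exp (b * t) * 1 := by
        gcongr
        · exact abs_exp_sub_one_le_exp (mul_le_mul_of_nonneg_right (hρ n) ht) (by positivity)
        · exact hσ n
    _ = |β n| * exp (b * t) := mul_one _

section Dynkin

variable {a : ℝ} {f : ℝ → ℝ}

theorem sineCoeff_generator (ha : a ≠ 0) (hf : ContDiff ℝ 2 f) (hf_zero : f 0 = 0) (hf_a : f a = 0)
    (r : ℝ) (n : ℕ) :
    sineCoeff a (fun y ↦ deriv (deriv f) y / 2 + r * f y) n =
      (r - (n * (π / a)) ^ 2 / 2) * sineCoeff a f n := by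
  simp only [div_eq_inv_mul _ (2 : ℝ)]
  rw [sineCoeff_add (((continuous_deriv_deriv hf).const_mul 2⁻¹).intervalIntegrable _ _)
    ((hf.continuous.const_mul r).intervalIntegrable _ _), sineCoeff_const_mul,
    sineCoeff_const_mul, sineCoeff_deriv_deriv ha hf hf_zero hf_a]
  ring

theorem hasSum_exp_mul_killedSemigroup_generator (ha : 0 < a) (hf : ContDiff ℝ 2 f)
    (hf_zero : f 0 = 0) (hf_a : f a = 0) (r x : ℝ) {s : ℝ} (hs : 0 < s) :
    HasSum (fun n : ℕ ↦ sineCoeff a f n * ((r - (n * (π / a)) ^ 2 / 2) *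
        exp ((r - (n * (π / a)) ^ 2 / 2) * s)) * sin (n * (π / a * x)))
      (exp (r * s) * killedSemigroup a s (fun y ↦ deriv (deriv f) y / 2 + r * f y) x) := by
  refine ((hasSum_killedSemigroup ha hs
    ((continuous_deriv_deriv_div_two_add hf r).intervalIntegrable _ _) x).mul_left
      (exp (r * s))).congr_fun fun n ↦ ?_
  rw [sineCoeff_generator ha.ne' hf hf_zero hf_a, sub_mul _ _ s, sub_eq_add_neg (r * s), exp_add]
  ring_nf

theorem intervalIntegrable_and_integral_exp_mul_killedSemigroup (ha : 0 < a) (hf : ContDiff ℝ 2 f)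
    (hf_zero : f 0 = 0) (hf_a : f a = 0) (r : ℝ) {x t : ℝ} (hx : x ∈ Icc 0 a) (ht : 0 < t) :
    IntervalIntegrable (fun s ↦ exp (r * s) *
        killedSemigroup a s (fun y ↦ deriv (deriv f) y / 2 + r * f y) x) volume 0 t ∧
      ∫ s in 0..t, exp (r * s) *
        killedSemigroup a s (fun y ↦ deriv (deriv f) y / 2 + r * f y) x =
      exp (r * t) * killedSemigroup a t f x - f x := by
  let ρ (n : ℕ) : ℝ := r - (n * (π / a)) ^ 2 / 2
  let G (n : ℕ) (s : ℝ) : ℝ := sineCoeff a f n * (ρ n * exp (ρ n * s)) * sin (n * (π / a * x))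
  have hsum := summable_abs_sineCoeff ha hf hf_zero hf_a
  have hG_int (n : ℕ) : Integrable (G n) (volume.restrict (Ioc 0 t)) :=
    Continuous.integrableOn_Ioc (by fun_prop)
  have hρ (n : ℕ) : ρ n ≤ |r| := (sub_le_self _ (by positivity)).trans (le_abs_self _)
  have hG_norm : Summable fun n ↦ ∫ s in Ioc 0 t, ‖G n s‖ :=
    summable_integral_norm_mul_exp_mul hsum hρ (abs_nonneg _) (fun _ ↦ abs_sin_le_one _) ht.le
  have hG_sum : ∀ᵐ s ∂volume.restrict (Ioc 0 t), HasSum (G · s) (exp (r * s) *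
      killedSemigroup a s (fun y ↦ deriv (deriv f) y / 2 + r * f y) x) :=
    (ae_restrict_iff' measurableSet_Ioc).2 <| .of_forall fun s hs ↦
      hasSum_exp_mul_killedSemigroup_generator ha hf hf_zero hf_a r x hs.1
  refine ⟨(intervalIntegrable_iff_integrableOn_Ioc_of_le ht.le).2
    (integrable_of_hasSum_of_summable_integral_norm hG_int hG_norm hG_sum), ?_⟩
  have hleft := hasSum_integral_of_summable_integral_norm hG_int hG_norm
  rw [integral_congr_ae (hG_sum.mono fun s hs ↦ hs.tsum_eq),
    ← intervalIntegral.integral_of_le ht.le] at hleft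
  have hright := ((hasSum_killedSemigroup ha ht (hf.continuous.intervalIntegrable 0 a)
    x).mul_left (exp (r * t))).sub (hasSum_sineCoeff ha hf.continuous hf_zero hf_a hsum hx)
  refine hleft.unique (hright.congr_fun fun n ↦ ?_)
  rw [← intervalIntegral.integral_of_le ht.le]
  simp only [G]
  rw [intervalIntegral.integral_mul_const, intervalIntegral.integral_const_mul,
    integral_mul_exp_mul]
  simp only [ρ]
  rw [sub_mul r, sub_eq_add_neg (r * t), exp_add]
  ring_nf

end Dynkin

theorem exp_mul_killedSemigroup_sin {a t x : ℝ} (ha : 0 < a) (ht : 0 < t) (hx : x ∈ Icc 0 a) :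
    exp ((π / a) ^ 2 / 2 * t) * killedSemigroup a t (fun y ↦ sin (π / a * y)) x =
      sin (π / a * x) := by
  have hlin (y : ℝ) : HasDerivAt (fun y : ℝ ↦ π / a * y) (π / a) y := by
    simpa using (hasDerivAt_id y).const_mul (π / a)
  have hderiv : (deriv fun y ↦ sin (π / a * y)) = fun y ↦ cos (π / a * y) * (π / a) :=
    deriv_eq fun y ↦ (hlin y).sin
  have hderiv₂ : (deriv fun y ↦ cos (π / a * y) * (π / a)) =
      fun y ↦ -sin (π / a * y) * (π / a) * (π / a) :=
    deriv_eq fun y ↦ (hlin y).cos.mul_const (π / a)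
  have hgen (y : ℝ) : deriv (deriv fun y ↦ sin (π / a * y)) y / 2 +
      (π / a) ^ 2 / 2 * sin (π / a * y) = 0 := by
    rw [hderiv, hderiv₂]
    ring
  have hdynkin := (intervalIntegrable_and_integral_exp_mul_killedSemigroup ha
    (f := fun y ↦ sin (π / a * y)) (by fun_prop) (by simp)
    (by simp [div_mul_cancel₀ π ha.ne']) ((π / a) ^ 2 / 2) hx ht).2
  simp only [hgen, killedSemigroup, mul_zero, intervalIntegral.integral_zero] at hdynkin
  exact (sub_eq_zero.1 hdynkin.symm)

theorem integral_ptaboo_mul (a s x : ℝ) (h : ℝ → ℝ) :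
    ∫ y in 0..a, ptaboo a s x y * h y =
      exp ((π / a) ^ 2 / 2 * s) * killedSemigroup a s (fun y ↦ sin (π / a * y) * h y) x /
        sin (π / a * x) := by
  rw [killedSemigroup, mul_div_right_comm, ← intervalIntegral.integral_const_mul]
  congr 1 with y
  rw [ptaboo, show π * y / a = π / a * y by ring, show π * x / a = π / a * x by ring,
    show π ^ 2 * s / (2 * a ^ 2) = (π / a) ^ 2 / 2 * s by ring]
  ring

theorem integral_integral_ptaboo_mul_le {a x t K : ℝ} (hx : x ∈ Ioo 0 a) (ht : 0 ≤ t)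
    {g h : ℝ → ℝ} (hg : ContDiff ℝ 2 g) (hg_zero : g 0 = 0) (hg_a : g a = 0)
    (hg_nonneg : ∀ y ∈ Icc 0 a, 0 ≤ g y) (hh : Continuous h)
    (hgh : ∀ y, deriv (deriv g) y / 2 + (π / a) ^ 2 / 2 * g y + sin (π / a * y) * h y =
      K * sin (π / a * y)) :
    ∫ s in 0..t, ∫ y in 0..a, ptaboo a s x y * h y ≤ K * t + g x / sin (π / a * x) := by
  have ha : 0 < a := hx.1.trans hx.2
  have hx' : x ∈ Icc 0 a := Ioo_subset_Icc_self hx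
  have hsin := sin_pi_div_mul_pos hx
  rcases ht.eq_or_lt with rfl | ht
  · simpa using div_nonneg (hg_nonneg x hx') hsin.le
  obtain ⟨hint, hdynkin⟩ := intervalIntegrable_and_integral_exp_mul_killedSemigroup ha hg hg_zero
    hg_a ((π / a) ^ 2 / 2) hx' ht
  have hinner : ∀ s ∈ Ioo 0 t, ∫ y in 0..a, ptaboo a s x y * h y =
      K - exp ((π / a) ^ 2 / 2 * s) * killedSemigroup a s
        (fun y ↦ deriv (deriv g) y / 2 + (π / a) ^ 2 / 2 * g y) x / sin (π / a * x) := by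
    intro s hs
    have hh_sin : Continuous fun y ↦ sin (π / a * y) * h y := by fun_prop
    have hadd := killedSemigroup_add ha hs.1
      ((continuous_deriv_deriv_div_two_add hg ((π / a) ^ 2 / 2)).intervalIntegrable 0 a)
      (hh_sin.intervalIntegrable 0 a) x
    simp only [hgh, killedSemigroup_const_mul] at hadd
    rw [integral_ptaboo_mul, eq_sub_iff_add_eq, ← add_div, ← mul_add, add_comm, ← hadd,
      mul_left_comm, exp_mul_killedSemigroup_sin ha hs.1 hx', mul_div_cancel_right₀ _ hsin.ne']
  have hkilled : 0 ≤ exp ((π / a) ^ 2 / 2 * t) * killedSemigroup a t g x :=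
    mul_nonneg (exp_pos _).le (killedSemigroup_nonneg ha ht hg hg_zero hg_a hg_nonneg hx')
  calc ∫ s in 0..t, ∫ y in 0..a, ptaboo a s x y * h y
      = K * t - (exp ((π / a) ^ 2 / 2 * t) * killedSemigroup a t g x - g x) / sin (π / a * x) := by
        rw [intervalIntegral.integral_congr_Ioo_of_le ht.le hinner, intervalIntegral.integral_sub
          intervalIntegrable_const (hint.div_const _), intervalIntegral.integral_const,
          intervalIntegral.integral_div, hdynkin, smul_eq_mul, sub_zero, mul_comm]
    _ ≤ K * t + g x / sin (π / a * x) := by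
        rw [sub_div, sub_sub_eq_add_sub, sub_le_self_iff]
        positivity

/-! ### The Poisson equation -/

theorem deriv_deriv_cos_mul_add_sin_mul (ω : ℝ) {p p' p'' q q' q'' : ℝ → ℝ}
    (hp : ∀ y, HasDerivAt p (p' y) y) (hp' : ∀ y, HasDerivAt p' (p'' y) y)
    (hq : ∀ y, HasDerivAt q (q' y) y) (hq' : ∀ y, HasDerivAt q' (q'' y) y) (y : ℝ) :
    deriv (deriv fun y ↦ cos (ω * y) * p y + sin (ω * y) * q y) y =
      -ω ^ 2 * (cos (ω * y) * p y + sin (ω * y) * q y) +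
        cos (ω * y) * (p'' y + 2 * ω * q' y) + sin (ω * y) * (q'' y - 2 * ω * p' y) := by
  have hlin (y : ℝ) : HasDerivAt (fun y ↦ ω * y) ω y := by
    simpa using (hasDerivAt_id y).const_mul ω
  have hderiv : (deriv fun y ↦ cos (ω * y) * p y + sin (ω * y) * q y) = fun y ↦
      cos (ω * y) * (p' y + ω * q y) + sin (ω * y) * (q' y - ω * p y) := by
    refine deriv_eq fun y ↦ HasDerivAt.congr_deriv
      (((hlin y).cos.mul (hp y)).add ((hlin y).sin.mul (hq y))) ?_
    ring
  rw [hderiv]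
  refine HasDerivAt.deriv (HasDerivAt.congr_deriv
    (((hlin y).cos.mul ((hp' y).add ((hq y).const_mul ω))).add
      ((hlin y).sin.mul ((hq' y).sub ((hp y).const_mul ω)))) ?_)
  simp only [Pi.add_apply]
  ring

theorem mul_cos_le_sin {θ : ℝ} (hθ : θ ∈ Icc 0 π) : θ * cos θ ≤ sin θ := by
  have hsin := sin_nonneg_of_mem_Icc hθ
  rcases lt_or_ge θ (π / 2) with hlt | hge
  · have hcos : 0 < cos θ := cos_pos_of_mem_Ioo ⟨by linarith [hθ.1, pi_pos], hlt⟩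
    rw [← le_div_iff₀ hcos, ← tan_eq_sin_div_cos]
    exact le_tan hθ.1 hlt
  · have hcos := cos_nonpos_of_pi_div_two_le_of_le hge (by linarith [hθ.2, pi_pos])
    exact (mul_nonpos_of_nonneg_of_nonpos hθ.1 hcos).trans hsin

theorem le_add_mul_min_one {u v α β : ℝ} (hα : 0 ≤ α) (hβ : 0 ≤ β) (hv : 0 ≤ v)
    (hu : u ≤ α) (huv : u ≤ β * v) : u ≤ (α + β) * min 1 v := by
  rw [mul_min_of_nonneg _ _ (add_nonneg hα hβ), mul_one]
  exact le_min (hu.trans (le_add_of_nonneg_right hβ))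
    (huv.trans (mul_le_mul_of_nonneg_right (le_add_of_nonneg_left hα) hv))

/-- The difference between the concave function `1 - exp (-c * y)` and its chord over
`[0, a]`; up to a constant it is the coefficient of the cosine in `poissonSolution`. -/
noncomputable def chordGap (c a y : ℝ) : ℝ := 1 - exp (-c * y) - (1 - exp (-c * a)) / a * y

/-- The common factor `2 / (c² + 4π² / a²)` of the coefficients of `poissonSolution`. -/
noncomputable def poissonFactor (c a : ℝ) : ℝ := 2 / (c ^ 2 + 4 * (π / a) ^ 2)

/-- The mean of `exp (-c * y)` under the invariant density `2 / a * sin (π / a * y) ^ 2` of the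
taboo process on `(0, a)`, in closed form. -/
noncomputable def stationaryMean (c a : ℝ) : ℝ :=
  2 * (π / a) ^ 2 * poissonFactor c a * (1 - exp (-c * a)) / (c * a)

/-- The product of `sin (π / a * y)` with a solution `u` of the Poisson equation
`L u = stationaryMean c a - exp (-c * y)`, where `L` is the generator of the taboo process on
`(0, a)`. Solutions `u` are unique up to a constant; the constant `6 / (c * a)` makes this one
nonnegative. -/
noncomputable def poissonSolution (c a y : ℝ) : ℝ :=
  cos (π / a * y) * (2 * (π / a) / c * poissonFactor c a * chordGap c a y) +
    sin (π / a * y) * (poissonFactor c a * (6 / (c * a) - exp (-c * y)))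

section PoissonSolution

variable {c a y : ℝ}

theorem chordGap_zero (c a : ℝ) : chordGap c a 0 = 0 := by simp [chordGap]

theorem chordGap_self (ha : a ≠ 0) : chordGap c a a = 0 := by
  rw [chordGap, div_mul_cancel₀ _ ha, sub_self]

theorem chordGap_nonneg (ha : 0 < a) (hy : y ∈ Icc 0 a) : 0 ≤ chordGap c a y := by
  have hle : y / a ≤ 1 := (div_le_one ha).2 hy.2
  have hconv := convexOn_exp.2 (mem_univ (0 : ℝ)) (mem_univ (-c * a)) (sub_nonneg.2 hle)
    (div_nonneg hy.1 ha.le) (sub_add_cancel 1 (y / a))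
  have hy_eq : (1 - y / a) • (0 : ℝ) + (y / a) • (-c * a) = -c * y := by
    simp only [smul_eq_mul]
    field_simp
    ring
  rw [hy_eq, exp_zero, smul_eq_mul, smul_eq_mul] at hconv
  calc (0 : ℝ) ≤ (1 - y / a) * 1 + y / a * exp (-c * a) - exp (-c * y) := sub_nonneg.2 hconv
    _ = chordGap c a y := by rw [chordGap]; ring

theorem chordGap_le_one_sub_exp (hc : 0 ≤ c) (ha : 0 < a) (hy : 0 ≤ y) :
    chordGap c a y ≤ 1 - exp (-c * y) := by
  have hexp : exp (-c * a) ≤ 1 :=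
    exp_le_one_iff.2 (mul_nonpos_of_nonpos_of_nonneg (neg_nonpos.2 hc) ha.le)
  exact sub_le_self _ (mul_nonneg (div_nonneg (sub_nonneg.2 hexp) ha.le) hy)

theorem chordGap_le_one_sub_div (hc : 0 ≤ c) (ha : 0 < a) (hy : y ∈ Icc 0 a) :
    chordGap c a y ≤ 1 - y / a := by
  have hexp : exp (-c * a) * (y / a) ≤ exp (-c * y) * 1 :=
    mul_le_mul (exp_le_exp.2 (mul_le_mul_of_nonpos_left hy.2 (neg_nonpos.2 hc)))
      ((div_le_one ha).2 hy.2) (div_nonneg hy.1 ha.le) (exp_pos _).le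
  calc chordGap c a y = 1 - y / a + (exp (-c * a) * (y / a) - exp (-c * y) * 1) := by
        rw [chordGap]; ring
    _ ≤ 1 - y / a := by linarith

theorem mul_exp_neg_mul_le_one (c y : ℝ) : c * y * exp (-c * y) ≤ 1 := by
  rw [neg_mul]
  exact (mul_exp_neg_le_exp_neg_one _).trans (exp_le_one_iff.2 (by norm_num))

theorem mul_exp_sub_div_le_chordGap (ha : 0 < a) (hy : 0 ≤ y) :
    c * y * exp (-c * y) - y / a ≤ chordGap c a y := by
  have hexp : exp (-c * y) * (c * y + 1) ≤ 1 := by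
    calc exp (-c * y) * (c * y + 1) ≤ exp (-c * y) * exp (c * y) := by
          gcongr
          exact add_one_le_exp _
      _ = 1 := by rw [← exp_add, neg_mul, neg_add_cancel, exp_zero]
  have hchord : 0 ≤ exp (-c * a) * (y / a) := by positivity
  have hgap : chordGap c a y = 1 - exp (-c * y) - y / a + exp (-c * a) * (y / a) := by
    rw [chordGap]; ring
  linarith

theorem poissonFactor_pos (hc : 0 < c) (a : ℝ) : 0 < poissonFactor c a := by
  unfold poissonFactor
  positivity

theorem poissonFactor_le (hc : 0 < c) (a : ℝ) : poissonFactor c a ≤ 2 / c ^ 2 := by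
  unfold poissonFactor
  gcongr
  exact le_add_of_nonneg_right (by positivity)

theorem poissonFactor_div_le_one_div (hc : 0 < c) (ha : 0 < a) : poissonFactor c a / a ≤ 1 / c := by
  have hamgm : 2 * c * (2 * (π / a)) ≤ c ^ 2 + (2 * (π / a)) ^ 2 := two_mul_le_add_sq _ _
  have hpi : 2 * c ≤ 2 * c * (2 * π) :=
    le_mul_of_one_le_right (by positivity) (by linarith [pi_gt_three])
  rw [poissonFactor, div_div, div_le_div_iff₀ (by positivity) hc]
  calc 2 * c ≤ 2 * c * (2 * π) := hpi
    _ = 2 * c * (2 * (π / a)) * a := by field_simp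
    _ ≤ (c ^ 2 + (2 * (π / a)) ^ 2) * a := by gcongr
    _ = 1 * ((c ^ 2 + 4 * (π / a) ^ 2) * a) := by ring

theorem contDiff_poissonSolution (c a : ℝ) : ContDiff ℝ 2 (poissonSolution c a) := by
  unfold poissonSolution chordGap
  fun_prop

theorem poissonSolution_zero (c a : ℝ) : poissonSolution c a 0 = 0 := by
  simp [poissonSolution, chordGap_zero]

theorem poissonSolution_self (ha : a ≠ 0) : poissonSolution c a a = 0 := by
  simp [poissonSolution, chordGap_self ha, div_mul_cancel₀ π ha]

theorem poissonSolution_equation (hc : c ≠ 0) (ha : a ≠ 0) (y : ℝ) :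
    deriv (deriv (poissonSolution c a)) y / 2 + (π / a) ^ 2 / 2 * poissonSolution c a y +
      sin (π / a * y) * exp (-c * y) = stationaryMean c a * sin (π / a * y) := by
  have hexp (y : ℝ) : HasDerivAt (fun y ↦ exp (-c * y)) (-c * exp (-c * y)) y := by
    simpa [mul_comm] using ((hasDerivAt_id y).const_mul (-c)).exp
  have hgap (y : ℝ) : HasDerivAt (chordGap c a)
      (c * exp (-c * y) - (1 - exp (-c * a)) / a) y :=
    HasDerivAt.congr_deriv (((hexp y).const_sub 1).sub ((hasDerivAt_id y).const_mul _)) (by ring)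
  have hgap' (y : ℝ) : HasDerivAt (fun y ↦ c * exp (-c * y) - (1 - exp (-c * a)) / a)
      (c * (-c * exp (-c * y))) y :=
    ((hexp y).const_mul c).sub_const _
  have hsin_coeff (y : ℝ) : HasDerivAt (fun y ↦ 6 / (c * a) - exp (-c * y))
      (c * exp (-c * y)) y := by
    simpa using (hexp y).const_sub (6 / (c * a))
  have hfactor : poissonFactor c a * (c ^ 2 + 4 * (π / a) ^ 2) = 2 :=
    div_mul_cancel₀ 2 (by positivity)
  have hderiv : deriv (deriv (poissonSolution c a)) y = _ :=
    deriv_deriv_cos_mul_add_sin_mul (π / a) (fun y ↦ (hgap y).const_mul _)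
      (fun y ↦ (hgap' y).const_mul _) (fun y ↦ (hsin_coeff y).const_mul _)
      (fun y ↦ ((hexp y).const_mul c).const_mul _) y
  rw [hderiv, poissonSolution, stationaryMean]
  generalize π / a = ω at *
  generalize poissonFactor c a = M at *
  generalize exp (-c * y) = E
  field_simp
  linear_combination (-(c * a * E * sin (ω * y))) * hfactor

theorem sin_mul_le_cos_mul_chordGap_of_le_half (hc : 0 < c) (ha : 0 < a)
    (hy : y ∈ Icc 0 (a / 2)) :
    sin (π / a * y) * (exp (-c * y) - 6 / (c * a)) ≤
      2 * (π / a) / c * (cos (π / a * y) * chordGap c a y) := by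
  have hθ := div_mul_mem_Icc ha pi_pos.le ⟨hy.1, hy.2.trans (half_le_self ha.le)⟩
  have hθ_half : π / a * y ≤ π / 2 :=
    calc π / a * y ≤ π / a * (a / 2) := by gcongr; exact hy.2
      _ = π / 2 := by field_simp
  have hcos : 0 ≤ cos (π / a * y) := cos_nonneg_of_mem_Icc ⟨by linarith [hθ.1, pi_pos], hθ_half⟩
  have hcos_ge : 1 - 2 * (y / a) ≤ cos (π / a * y) :=
    calc 1 - 2 * (y / a) = 1 - 2 / π * (π / a * y) := by field_simp
      _ ≤ cos (π / a * y) := one_sub_mul_le_cos hθ.1 hθ_half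
  have hsin : 0 ≤ sin (π / a * y) := sin_nonneg_of_mem_Icc hθ
  have hexp : exp (-c * y) * (y / a) ≤ 1 / (c * a) :=
    calc exp (-c * y) * (y / a) = c * y * exp (-c * y) / (c * a) := by field_simp
      _ ≤ 1 / (c * a) := by gcongr; exact mul_exp_neg_mul_le_one c y
  calc sin (π / a * y) * (exp (-c * y) - 6 / (c * a))
      ≤ 2 * (exp (-c * y) * (sin (π / a * y) * (1 - 2 * (y / a)))) -
        2 / (c * a) * sin (π / a * y) := by
        have hgap := mul_nonneg hsin (sub_nonneg.2 hexp)
        have hexp_pos := mul_nonneg hsin (exp_pos (-c * y)).le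
        linear_combination 4 * hgap + hexp_pos
    _ ≤ 2 * (exp (-c * y) * (sin (π / a * y) * cos (π / a * y))) -
        2 / (c * a) * (π / a * y * cos (π / a * y)) := by
        gcongr
        exact mul_cos_le_sin hθ
    _ ≤ 2 * (exp (-c * y) * (π / a * y * cos (π / a * y))) -
        2 / (c * a) * (π / a * y * cos (π / a * y)) := by
        gcongr
        exact sin_le hθ.1
    _ = 2 * (π / a) / c * (cos (π / a * y) * (c * y * exp (-c * y) - y / a)) := by field_simp
    _ ≤ 2 * (π / a) / c * (cos (π / a * y) * chordGap c a y) := by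
        gcongr
        exact mul_exp_sub_div_le_chordGap ha hy.1

theorem sin_mul_le_cos_mul_chordGap_of_half_le (hc : 0 < c) (ha : 0 < a)
    (hy : y ∈ Icc (a / 2) a) :
    sin (π / a * y) * (exp (-c * y) - 6 / (c * a)) ≤
      2 * (π / a) / c * (cos (π / a * y) * chordGap c a y) := by
  have hy' : y ∈ Icc 0 a := ⟨(half_pos ha).le.trans hy.1, hy.2⟩
  have hθ := div_mul_mem_Icc ha pi_pos.le hy'
  have hsin : 0 ≤ sin (π / a * y) := sin_nonneg_of_mem_Icc hθ
  have hgap_le : chordGap c a y ≤ sin (π / a * y) / 2 := by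
    have hθ_half : π - π / a * y ≤ π / 2 :=
      calc π - π / a * y ≤ π - π / a * (a / 2) := by gcongr; exact hy.1
        _ = π / 2 := by field_simp; ring
    have hjordan := mul_le_sin (sub_nonneg.2 hθ.2) hθ_half
    rw [sin_pi_sub] at hjordan
    calc chordGap c a y ≤ 1 - y / a := chordGap_le_one_sub_div hc.le ha hy'
      _ = 2 / π * (π - π / a * y) / 2 := by field_simp
      _ ≤ sin (π / a * y) / 2 := by gcongr
  have hexp : exp (-c * y) ≤ 2 / (c * a) :=
    calc exp (-c * y) ≤ 2 * (y / a) * exp (-c * y) := by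
          refine le_mul_of_one_le_left (exp_pos _).le ?_
          rw [← mul_div_assoc, one_le_div ha]
          linarith [hy.1]
      _ = 2 * (c * y * exp (-c * y)) / (c * a) := by field_simp
      _ ≤ 2 * 1 / (c * a) := by gcongr; exact mul_exp_neg_mul_le_one c y
      _ = 2 / (c * a) := by rw [mul_one]
  calc sin (π / a * y) * (exp (-c * y) - 6 / (c * a))
      ≤ sin (π / a * y) * (2 / (c * a) - 6 / (c * a)) := by gcongr
    _ = 4 * (-(sin (π / a * y) / (c * a))) := by ring
    _ ≤ π * (-(sin (π / a * y) / (c * a))) :=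
        mul_le_mul_of_nonpos_right pi_le_four (neg_nonpos.2 (by positivity))
    _ = 2 * (π / a) / c * -(sin (π / a * y) / 2) := by field_simp
    _ ≤ 2 * (π / a) / c * (-1 * chordGap c a y) := by gcongr; linarith
    _ ≤ 2 * (π / a) / c * (cos (π / a * y) * chordGap c a y) := by
        gcongr
        · exact chordGap_nonneg ha hy'
        · exact neg_one_le_cos _

theorem poissonSolution_nonneg (hc : 0 < c) (ha : 0 < a) (hy : y ∈ Icc 0 a) :
    0 ≤ poissonSolution c a y := by
  have hle : sin (π / a * y) * (exp (-c * y) - 6 / (c * a)) ≤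
      2 * (π / a) / c * (cos (π / a * y) * chordGap c a y) :=
    (le_total y (a / 2)).elim
      (fun h ↦ sin_mul_le_cos_mul_chordGap_of_le_half hc ha ⟨hy.1, h⟩)
      (fun h ↦ sin_mul_le_cos_mul_chordGap_of_half_le hc ha ⟨h, hy.2⟩)
  calc 0 ≤ poissonFactor c a * (2 * (π / a) / c * (cos (π / a * y) * chordGap c a y) -
        sin (π / a * y) * (exp (-c * y) - 6 / (c * a))) :=
        mul_nonneg (poissonFactor_pos hc a).le (sub_nonneg.2 hle)
    _ = poissonSolution c a y := by rw [poissonSolution]; ring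

theorem stationaryMean_le (hc : 0 < c) (ha : 0 < a) :
    stationaryMean c a ≤ 4 * π ^ 2 / c ^ 3 / a ^ 3 := by
  have hexp : 0 ≤ 1 - exp (-c * a) := sub_nonneg.2 <|
    exp_le_one_iff.2 (mul_nonpos_of_nonpos_of_nonneg (neg_nonpos.2 hc.le) ha.le)
  calc stationaryMean c a ≤ 2 * (π / a) ^ 2 * (2 / c ^ 2) * 1 / (c * a) := by
        unfold stationaryMean
        gcongr
        · exact poissonFactor_le hc a
        · exact sub_le_self _ (exp_pos _).le
    _ = 4 * π ^ 2 / c ^ 3 / a ^ 3 := by field_simp; norm_num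

theorem poissonSolution_le_sin_mul (hc : 0 < c) (hy : y ∈ Ioo 0 a) :
    poissonSolution c a y ≤ sin (π / a * y) *
      (2 / c * (poissonFactor c a * (chordGap c a y / y)) +
        6 / c * (poissonFactor c a / a)) := by
  have ha : 0 < a := hy.1.trans hy.2
  have hθ := div_mul_mem_Icc ha pi_pos.le (Ioo_subset_Icc_self hy)
  have hgap : 0 ≤ chordGap c a y / y :=
    div_nonneg (chordGap_nonneg ha (Ioo_subset_Icc_self hy)) hy.1.le
  have hM : 0 ≤ poissonFactor c a := (poissonFactor_pos hc a).le
  have hsin : 0 ≤ sin (π / a * y) := sin_nonneg_of_mem_Icc hθ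
  calc poissonSolution c a y
      = 2 / c * poissonFactor c a * (chordGap c a y / y) * (π / a * y * cos (π / a * y)) +
        sin (π / a * y) * (poissonFactor c a * (6 / (c * a) - exp (-c * y))) := by
        have := hy.1.ne'
        rw [poissonSolution]
        field_simp
    _ ≤ 2 / c * poissonFactor c a * (chordGap c a y / y) * sin (π / a * y) +
        sin (π / a * y) * (poissonFactor c a * (6 / (c * a) - 0)) := by
        gcongr
        · exact mul_cos_le_sin hθ
        · exact (exp_pos _).le
    _ = _ := by ring

theorem poissonFactor_mul_chordGap_div_le (hc : 0 < c) (hy : y ∈ Ioo 0 a) :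
    poissonFactor c a * (chordGap c a y / y) ≤ (2 / c + 2 / c ^ 2) * min 1 (1 / y) := by
  have hy_pos : 0 < y := hy.1
  have hgap := chordGap_le_one_sub_exp hc.le (hy.1.trans hy.2) hy.1.le
  have hgap_nonneg := chordGap_nonneg (c := c) (hy.1.trans hy.2) (Ioo_subset_Icc_self hy)
  have hle (b : ℝ) (hb : chordGap c a y ≤ b) :
      poissonFactor c a * (chordGap c a y / y) ≤ 2 / c ^ 2 * (b / y) := by
    gcongr
    exact poissonFactor_le hc a
  refine le_add_mul_min_one (by positivity) (by positivity) (by positivity) ?_ ?_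
  · calc poissonFactor c a * (chordGap c a y / y) ≤ 2 / c ^ 2 * (c * y / y) :=
          hle _ (by linarith [add_one_le_exp (-c * y)])
      _ = 2 / c := by field_simp
  · exact hle 1 (by linarith [exp_pos (-c * y)])

theorem poissonFactor_div_le (hc : 0 < c) (hy : y ∈ Ioo 0 a) :
    poissonFactor c a / a ≤ (2 / c + 2 / c ^ 2) * min 1 (1 / y) := by
  have hy_pos : 0 < y := hy.1
  refine le_add_mul_min_one (by positivity) (by positivity) (by positivity) ?_ ?_
  · calc poissonFactor c a / a ≤ 1 / c := poissonFactor_div_le_one_div hc (hy.1.trans hy.2)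
      _ ≤ 2 / c := by gcongr; norm_num
  · calc poissonFactor c a / a ≤ 2 / c ^ 2 / y := by
          gcongr
          · exact poissonFactor_le hc a
          · exact hy.2.le
      _ = 2 / c ^ 2 * (1 / y) := by rw [mul_one_div]

theorem poissonSolution_le (hc : 0 < c) (hy : y ∈ Ioo 0 a) :
    poissonSolution c a y ≤
      (16 / c ^ 2 + 16 / c ^ 3) * min 1 (1 / y) * sin (π / a * y) := by
  have hsin : 0 ≤ sin (π / a * y) := sin_nonneg_of_mem_Icc
    (div_mul_mem_Icc (hy.1.trans hy.2) pi_pos.le (Ioo_subset_Icc_self hy))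
  calc poissonSolution c a y
      ≤ sin (π / a * y) * (2 / c * (poissonFactor c a * (chordGap c a y / y)) +
        6 / c * (poissonFactor c a / a)) := poissonSolution_le_sin_mul hc hy
    _ ≤ sin (π / a * y) * (2 / c * ((2 / c + 2 / c ^ 2) * min 1 (1 / y)) +
        6 / c * ((2 / c + 2 / c ^ 2) * min 1 (1 / y))) := by
        gcongr _ * (_ * ?_ + _ * ?_)
        · exact poissonFactor_mul_chordGap_div_le hc hy
        · exact poissonFactor_div_le hc hy
    _ = (16 / c ^ 2 + 16 / c ^ 3) * min 1 (1 / y) * sin (π / a * y) := by ring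

end PoissonSolution

/-- For every `c > 0` there is `C` (depending only on `c`) such that
`∫_0^t ∫_0^a p^{taboo,a}_s(x,y)·e^{−cy} dy ds ≤ C·(t/a³ + min(1,1/x))`. -/
theorem stmt10 (c : ℝ) (hc : 0 < c) :
    ∃ C : ℝ, 0 < C ∧ ∀ a : ℝ, 0 < a → ∀ x ∈ Set.Ioo (0:ℝ) a, ∀ t : ℝ, 0 ≤ t →
      (∫ s in (0:ℝ)..t, ∫ y in (0:ℝ)..a, ptaboo a s x y * Real.exp (-c * y)) ≤
        C * (t / a^3 + min 1 (1/x)) := by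
  refine ⟨4 * π ^ 2 / c ^ 3 + (16 / c ^ 2 + 16 / c ^ 3), by positivity, fun a ha x hx t ht ↦ ?_⟩
  have hx_pos : 0 < x := hx.1
  have hsin : 0 < sin (π / a * x) := sin_pi_div_mul_pos hx
  calc ∫ s in 0..t, ∫ y in 0..a, ptaboo a s x y * exp (-c * y)
      ≤ stationaryMean c a * t + poissonSolution c a x / sin (π / a * x) :=
        integral_integral_ptaboo_mul_le hx ht (contDiff_poissonSolution c a)
          (poissonSolution_zero c a) (poissonSolution_self ha.ne')
          (fun y hy ↦ poissonSolution_nonneg hc ha hy) (by fun_prop)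
          (poissonSolution_equation hc.ne' ha.ne')
    _ ≤ 4 * π ^ 2 / c ^ 3 / a ^ 3 * t + (16 / c ^ 2 + 16 / c ^ 3) * min 1 (1 / x) := by
        gcongr
        · exact stationaryMean_le hc ha
        · exact (div_le_iff₀ hsin).2 (poissonSolution_le hc hx)
    _ = 4 * π ^ 2 / c ^ 3 * (t / a ^ 3) + (16 / c ^ 2 + 16 / c ^ 3) * min 1 (1 / x) := by ring
    _ ≤ (4 * π ^ 2 / c ^ 3 + (16 / c ^ 2 + 16 / c ^ 3)) * (t / a ^ 3 + min 1 (1 / x)) := by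
        rw [mul_add]
        gcongr ?_ * _ + ?_ * _
        · exact le_add_of_nonneg_right (by positivity)
        · exact le_add_of_nonneg_left (by positivity)
end
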